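/- arXiv:2308.06863 — 7 statements merged into one kernel-verified Lean document; each statement's English description precedes it below -/
import Mathlib

section
/- For every positive integer n, the n×n Delannoy matrix factors as D_n = L_n · Δ_n · L_nᵀ, where D_n = (D(i,j))_{0≤i,j<n}, L_n = (C(i,j))_{0≤i,j<n} is the matrix of binomial coefficients, and Δ_n is the diagonal matrix with diagonal entries 2^0, 2^1, …, 2^{n−1}. Equivalently, for all 0 ≤ i, j ≤ n−1 one has D(i,j) = ∑_{k=0}^{n−1} 2^k · C(i,k) · C(j,k). -/
/-!
Let `S_N(i,j) = ∑_{k<N} 2^k C(i,k) C(j,k)`. Expanding `C(i+1,k)` and `C(j+1,k)` with Pascal's rule,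
the `k`-th term of `S_N(i+1,j+1) - S_N(i,j+1) - S_N(i+1,j) - S_N(i,j)` becomes
`2^k C(i,k-1) C(j,k-1) - 2^(k+1) C(i,k) C(j,k)`, which telescopes to a single boundary term
(`choose_sum_recurrence`). That term vanishes once `N` exceeds `i + 1`, so `S_N` obeys the Delannoy
recurrence with the same initial values (`delannoy_eq_sum`). The matrix identity is this formula
read entrywise.
-/

open Matrix

/-- The Delannoy number `delannoy k l` is the number of lattice paths from `(0,0)` to `(k,l)`
using only steps `(1,0)`, `(0,1)`, `(1,1)`. -/
def delannoy : ℕ → ℕ → ℕ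
  | 0, _ => 1
  | _ + 1, 0 => 1
  | k + 1, l + 1 => delannoy k (l + 1) + delannoy (k + 1) l + delannoy k l

/-- The Delannoy recurrence for the truncated sums, with the boundary term
`2^(M+1) C(i,M) C(j,M)` left over from telescoping. -/
theorem choose_sum_recurrence (i j M : ℕ) :
    ∑ k ∈ Finset.range (M + 1), 2 ^ k * (i + 1).choose k * (j + 1).choose k
        + 2 ^ (M + 1) * i.choose M * j.choose M =
      ∑ k ∈ Finset.range (M + 1), 2 ^ k * i.choose k * (j + 1).choose k
        + ∑ k ∈ Finset.range (M + 1), 2 ^ k * (i + 1).choose k * j.choose k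
        + ∑ k ∈ Finset.range (M + 1), 2 ^ k * i.choose k * j.choose k := by
  induction M with
  | zero => simp
  | succ M ih =>
    simp only [Finset.sum_range_succ _ (M + 1)]
    simp only [Nat.choose_succ_succ' i M, Nat.choose_succ_succ' j M]
    linear_combination ih

theorem delannoy_eq_sum (N i j : ℕ) (hi : i < N) :
    delannoy i j = ∑ k ∈ Finset.range N, 2 ^ k * i.choose k * j.choose k := by
  obtain ⟨M, rfl⟩ : ∃ M, N = M + 1 := ⟨N - 1, by omega⟩
  induction i, j using delannoy.induct with
  | case1 j => simp [delannoy, Finset.sum_range_succ']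
  | case2 i => simp [delannoy, Finset.sum_range_succ']
  | case3 i j ih₁ ih₂ ih₃ =>
    have h := choose_sum_recurrence i j M
    rw [Nat.choose_eq_zero_of_lt (show i < M by omega)] at h
    rw [delannoy, ih₁ (by omega), ih₂ hi, ih₃ (by omega), ← h]
    simp

/-- The Zare factorization of the Delannoy matrix: `D_n = L_n · Δ_n · L_nᵀ`, where `L_n` is the
binomial matrix and `Δ_n = diag(2^0, …, 2^{n-1})`; equivalently
`D(i,j) = ∑_{k=0}^{n-1} 2^k C(i,k) C(j,k)` for `0 ≤ i, j < n`. -/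
theorem delannoy_matrix_factorization (n : ℕ) (hn : 0 < n) :
    (Matrix.of fun i j : Fin n => (delannoy i j : ℤ)) =
      (Matrix.of fun i j : Fin n => (Nat.choose i j : ℤ)) *
        Matrix.diagonal (fun k : Fin n => (2 ^ (k : ℕ) : ℤ)) *
        (Matrix.of fun i j : Fin n => (Nat.choose i j : ℤ))ᵀ ∧
    ∀ i j : Fin n, (delannoy i j : ℤ) =
      ∑ k : Fin n, 2 ^ (k : ℕ) * (Nat.choose i k : ℤ) * (Nat.choose j k : ℤ) := by
  have key : ∀ i j : Fin n, (delannoy i j : ℤ) =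
      ∑ k : Fin n, 2 ^ (k : ℕ) * (Nat.choose i k : ℤ) * (Nat.choose j k : ℤ) := by
    intro i j
    rw [delannoy_eq_sum n i j i.isLt, ← Fin.sum_univ_eq_sum_range
      (fun k => 2 ^ k * (i : ℕ).choose k * (j : ℕ).choose k)]
    push_cast
    rfl
  refine ⟨?_, key⟩
  ext i j
  rw [Matrix.mul_apply]
  simp only [Matrix.mul_diagonal, Matrix.of_apply, Matrix.transpose_apply]
  rw [key]
  exact Finset.sum_congr rfl fun k _ => by ring
end

section
/- For every natural number n, the determinant of the (n+1)×(n+1) Delannoy matrix (D(i,j))_{0≤i,j≤n} equals 2^{n(n+1)/2}. (This determinant counts the domino tilings of the Aztec diamond of order n, so this is the Aztec diamond theorem.) -/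
/-- The truncated binomial expansion `∑_{k < N} 2^k * C(i,k) * C(j,k)`. -/
def delannoySum (N i j : ℕ) : ℕ :=
  ∑ k ∈ Finset.range N, 2 ^ k * i.choose k * j.choose k

/-- The truncated expansion satisfies the Delannoy recurrence up to a boundary term, which vanishes
as soon as `i < N`. -/
lemma delannoySum_rec (N i j : ℕ) :
    delannoySum (N + 1) (i + 1) (j + 1) + 2 ^ (N + 1) * i.choose N * j.choose N =
      delannoySum (N + 1) i (j + 1) + delannoySum (N + 1) (i + 1) j + delannoySum (N + 1) i j := by
  induction N with
  | zero => simp [delannoySum]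
  | succ N ih =>
    unfold delannoySum at ih ⊢
    simp only [Finset.sum_range_succ _ (N + 1)]
    simp only [Nat.choose_succ_succ' i N, Nat.choose_succ_succ' j N]
    rw [pow_succ 2 (N + 1)]
    linear_combination ih

lemma delannoy_eq_sum_s1 (N i j : ℕ) (h : i ≤ N) : delannoy i j = delannoySum (N + 1) i j := by
  fun_induction delannoy i j with
  | case1 j => simp [delannoySum, Finset.sum_range_succ']
  | case2 i => simp [delannoySum, Finset.sum_range_succ']
  | case3 i j ih1 ih2 ih3 =>
    rw [ih1 (by omega), ih2 h, ih3 (by omega), ← delannoySum_rec, Nat.choose_eq_zero_of_lt h]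
    simp

/-- The Aztec diamond theorem in determinant form: the determinant of the `(n+1) × (n+1)`
Delannoy matrix `(D(i,j))_{0 ≤ i,j ≤ n}` equals `2^{n(n+1)/2}`. -/
theorem det_delannoy_matrix (n : ℕ) :
    (Matrix.of fun i j : Fin (n + 1) => (delannoy i j : ℤ)).det = 2 ^ (n * (n + 1) / 2) := by
  let L : Matrix (Fin (n + 1)) (Fin (n + 1)) ℤ := Matrix.of fun i k => ((i : ℕ).choose k : ℤ)
  let U : Matrix (Fin (n + 1)) (Fin (n + 1)) ℤ :=
    Matrix.of fun k j => 2 ^ (k : ℕ) * ((j : ℕ).choose k : ℤ)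
  have hLU : (Matrix.of fun i j : Fin (n + 1) => (delannoy i j : ℤ)) = L * U := by
    ext i j
    rw [Matrix.mul_apply, Matrix.of_apply, delannoy_eq_sum_s1 n i j (by omega), delannoySum,
      Finset.sum_range]
    push_cast
    refine Finset.sum_congr rfl fun k _ => ?_
    simp only [L, U, Matrix.of_apply]
    ring
  have hL : L.det = 1 := by
    rw [Matrix.det_of_isLowerTriangular L]
    · simp [L]
    · intro i k hik
      have hik' : (i : ℕ) < k := hik
      simp [L, Nat.choose_eq_zero_of_lt hik']
  have hU : U.det = 2 ^ (n * (n + 1) / 2) := by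
    rw [Matrix.det_of_isUpperTriangular (M := U)]
    · simp only [U, Matrix.of_apply, Nat.choose_self, Nat.cast_one, mul_one]
      rw [Finset.prod_pow_eq_pow_sum, ← Finset.sum_range (fun k => k), Finset.sum_range_id,
        Nat.add_sub_cancel, mul_comm]
    · intro k j hjk
      have hjk' : (j : ℕ) < k := hjk
      simp [U, Nat.choose_eq_zero_of_lt hjk']
  rw [hLU, Matrix.det_mul, hL, hU, one_mul]
end

section
/- For all fixed natural numbers i and j, the infinite series ∑_{k=0}^{∞} C(k,i)·C(k,j)·2^{−(k+1)} converges and its sum equals the Delannoy number D(i,j); in other words, the partial sums S(n,i,j) := ∑_{k=0}^{n−1} C(k,i)·C(k,j)·2^{−(k+1)} tend to D(i,j) as n → ∞. Consequently, each fixed-position entry of the inverse Delannoy matrix satisfies lim_{n→∞} (D_n^{-1})(i,j) = 2·(−1)^{i+j}·D(i,j). -/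
/-!
Every quantity involved is governed by Pascal's rule.

*The series.* Applying Pascal's rule to both binomials of `C(k,i+1) C(k,j+1) / 2^(k+1)` shows that
the partial sums satisfy the Delannoy recurrence up to the error `-2 C(n,i+1) C(n,j+1) / 2^(n+1)`
(`partialSum_succ_succ`). This error tends to `0`, so the limits obey the recurrence
defining the Delannoy numbers, and the boundary values are all `1`.

*The inverse.* The formula `D(k,l) = ∑ₘ C(k,m) C(l,m) 2^m` (`delannoy_eq_sum`) is the factorization
`D_n = L Δ Lᵀ` with `L = (C(i,j))` the Pascal matrix and `Δ = diag(2^m)`. The inverse of `L` is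
`((-1)^(i+j) C(i,j))` (`alternating_sum_choose_mul_choose`), hence
`D_n⁻¹(i,j) = ∑_{k<n} (-1)^(i+j) C(k,i) C(k,j) / 2^k = 2 (-1)^(i+j) S(n,i,j)`,
and the second limit follows from the first.
-/

open Filter

/-- The partial sum `S(n,x,y) = ∑_{k=0}^{n−1} C(k,x) C(k,y) 2^{−(k+1)}`. -/
noncomputable def delannoyPartialSum (n x y : ℕ) : ℝ :=
  ∑ k ∈ Finset.range n, (Nat.choose k x : ℝ) * (Nat.choose k y : ℝ) / 2 ^ (k + 1)

/-! ### The series -/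

/-- The partial sums satisfy the Delannoy recurrence up to twice the next term of the series. -/
lemma partialSum_succ_succ (n i j : ℕ) :
    delannoyPartialSum n (i + 1) (j + 1) =
      delannoyPartialSum n i (j + 1) + delannoyPartialSum n (i + 1) j + delannoyPartialSum n i j
        - 2 * ((n.choose (i + 1) : ℝ) * (n.choose (j + 1) : ℝ) / 2 ^ (n + 1)) := by
  induction n with
  | zero => simp [delannoyPartialSum]
  | succ n ih =>
    simp only [delannoyPartialSum, Finset.sum_range_succ, Nat.choose_succ_succ', Nat.cast_add]
      at ih ⊢
    rw [ih]
    field_simp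
    ring

lemma partialSum_zero_succ (n j : ℕ) :
    delannoyPartialSum n 0 (j + 1) =
      delannoyPartialSum n 0 j
        - 2 * ((n.choose 0 : ℝ) * (n.choose (j + 1) : ℝ) / 2 ^ (n + 1)) := by
  induction n with
  | zero => simp [delannoyPartialSum]
  | succ n ih =>
    simp only [delannoyPartialSum, Finset.sum_range_succ, Nat.choose_succ_succ', Nat.cast_add,
      Nat.choose_zero_right, Nat.cast_one] at ih ⊢
    rw [ih]
    field_simp
    ring

lemma partialSum_zero_zero (n : ℕ) :
    delannoyPartialSum n 0 0 = 1 - 2 * ((n.choose 0 : ℝ) * (n.choose 0 : ℝ) / 2 ^ (n + 1)) := by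
  induction n with
  | zero => simp [delannoyPartialSum]
  | succ n ih =>
    simp only [delannoyPartialSum, Finset.sum_range_succ, Nat.choose_zero_right, Nat.cast_one]
      at ih ⊢
    rw [ih]
    field_simp
    ring

lemma partialSum_comm (n i j : ℕ) : delannoyPartialSum n i j = delannoyPartialSum n j i := by
  simp only [delannoyPartialSum]
  exact Finset.sum_congr rfl fun k _ => by ring

lemma tendsto_term (i j : ℕ) :
    Tendsto (fun n : ℕ => 2 * ((n.choose i : ℝ) * (n.choose j : ℝ) / 2 ^ (n + 1))) atTop
      (nhds 0) := by
  -- The term is at most `n^(i+j) / 2^n`.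
  refine squeeze_zero (fun n => by positivity) (fun n => ?_)
    (tendsto_pow_const_div_const_pow_of_one_lt (i + j) (one_lt_two (α := ℝ)))
  have h : ∀ m : ℕ, (n.choose m : ℝ) ≤ (n : ℝ) ^ m := fun m => by
    exact_mod_cast Nat.choose_le_pow n m
  calc 2 * ((n.choose i : ℝ) * (n.choose j : ℝ) / 2 ^ (n + 1))
      = (n.choose i : ℝ) * (n.choose j : ℝ) / 2 ^ n := by field_simp; ring
    _ ≤ (n : ℝ) ^ (i + j) / 2 ^ n := by
      rw [pow_add]
      gcongr
      exacts [h i, h j]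

lemma tendsto_partialSum_zero (j : ℕ) :
    Tendsto (fun n => delannoyPartialSum n 0 j) atTop (nhds 1) := by
  induction j with
  | zero =>
    simp only [partialSum_zero_zero]
    simpa only [sub_zero] using (tendsto_const_nhds (x := (1 : ℝ))).sub (tendsto_term 0 0)
  | succ j ih =>
    simp only [partialSum_zero_succ]
    simpa only [sub_zero] using ih.sub (tendsto_term 0 (j + 1))

lemma tendsto_partialSum (i j : ℕ) :
    Tendsto (fun n => delannoyPartialSum n i j) atTop (nhds (delannoy i j : ℝ)) := by
  induction i generalizing j with
  | zero => simpa [delannoy] using tendsto_partialSum_zero j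
  | succ i ihi =>
    induction j with
    | zero =>
      simp only [partialSum_comm _ (i + 1) 0]
      simpa [delannoy] using tendsto_partialSum_zero (i + 1)
    | succ j ihj =>
      simp only [partialSum_succ_succ, delannoy, Nat.cast_add]
      simpa only [sub_zero] using
        (((ihi (j + 1)).add ihj).add (ihi j)).sub (tendsto_term (i + 1) (j + 1))

/-! ### The inverse matrix -/

/-- The truncated sums `∑_{m ≤ M} C(k,m) C(l,m) 2^m` satisfy the Delannoy recurrence up to a
boundary term, which vanishes as soon as `M > k`. -/
lemma sum_choose_recurrence (M k l : ℕ) :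
    ∑ m ∈ Finset.range (M + 1), ((k + 1).choose m : ℚ) * ((l + 1).choose m : ℚ) * 2 ^ m =
      ∑ m ∈ Finset.range (M + 1), (k.choose m : ℚ) * ((l + 1).choose m : ℚ) * 2 ^ m
      + ∑ m ∈ Finset.range (M + 1), ((k + 1).choose m : ℚ) * (l.choose m : ℚ) * 2 ^ m
      + ∑ m ∈ Finset.range (M + 1), (k.choose m : ℚ) * (l.choose m : ℚ) * 2 ^ m
      - 2 * ((k.choose M : ℚ) * (l.choose M : ℚ) * 2 ^ M) := by
  induction M with
  | zero => norm_num
  | succ M ih =>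
    rw [Finset.sum_range_succ, ih]
    simp only [Finset.sum_range_succ _ (M + 1), Nat.choose_succ_succ', Nat.cast_add]
    ring

lemma delannoy_eq_sum_s3 (k l M : ℕ) (h : k ≤ M) :
    (delannoy k l : ℚ) =
      ∑ m ∈ Finset.range (M + 1), (k.choose m : ℚ) * (l.choose m : ℚ) * 2 ^ m := by
  induction k generalizing l with
  | zero => simp [delannoy, Finset.sum_range_succ']
  | succ k ihk =>
    induction l with
    | zero => simp [delannoy, Finset.sum_range_succ']
    | succ l ihl =>
      rw [sum_choose_recurrence, ← ihk _ (by omega), ← ihl, ← ihk _ (by omega),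
        Nat.choose_eq_zero_of_lt (by omega : k < M)]
      simp [delannoy]

lemma alternating_sum_recurrence (N i j : ℕ) :
    ∑ k ∈ Finset.range (N + 1), (-1 : ℚ) ^ k * ((i + 1).choose k : ℚ) * (k.choose (j + 1) : ℚ) =
      -∑ k ∈ Finset.range N, (-1 : ℚ) ^ k * (i.choose k : ℚ) * (k.choose j : ℚ)
      + (-1) ^ N * (i.choose N : ℚ) * (N.choose (j + 1) : ℚ) := by
  induction N with
  | zero => simp
  | succ N ih =>
    rw [Finset.sum_range_succ, ih, Finset.sum_range_succ _ N]
    simp only [Nat.choose_succ_succ', Nat.cast_add]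
    ring

lemma alternating_sum_choose_succ (N i : ℕ) :
    ∑ k ∈ Finset.range (N + 1), (-1 : ℚ) ^ k * ((i + 1).choose k : ℚ) =
      (-1) ^ N * (i.choose N : ℚ) := by
  induction N with
  | zero => simp
  | succ N ih =>
    rw [Finset.sum_range_succ, ih]
    simp only [Nat.choose_succ_succ', Nat.cast_add]
    ring

/-- Binomial inversion: up to signs the Pascal matrix is its own inverse. -/
lemma alternating_sum_choose_mul_choose (N i j : ℕ) (h : i < N) :
    ∑ k ∈ Finset.range N, (-1 : ℚ) ^ k * (i.choose k : ℚ) * (k.choose j : ℚ) =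
      if i = j then (-1) ^ i else 0 := by
  induction i generalizing N j with
  | zero =>
    obtain ⟨N, rfl⟩ := Nat.exists_eq_succ_of_ne_zero (by omega : N ≠ 0)
    cases j <;> simp [Finset.sum_range_succ']
  | succ i ih =>
    obtain ⟨N, rfl⟩ := Nat.exists_eq_succ_of_ne_zero (by omega : N ≠ 0)
    have hz : i.choose N = 0 := Nat.choose_eq_zero_of_lt (by omega)
    cases j with
    | zero => simp [alternating_sum_choose_succ, hz]
    | succ j =>
      rw [Nat.succ_eq_add_one, alternating_sum_recurrence, ih N j (by omega), hz]
      by_cases hij : i = j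
      · simp [hij, pow_succ]
      · simp [hij]

open Matrix in
lemma inv_delannoy_matrix (n : ℕ) :
    (Matrix.of fun s t : Fin n => (delannoy s t : ℚ))⁻¹ =
      Matrix.of fun s t : Fin n => ∑ k : Fin n,
        (-1 : ℚ) ^ ((s : ℕ) + t) * ((k : ℕ).choose s : ℚ) * ((k : ℕ).choose t : ℚ) / 2 ^ (k : ℕ) := by
  set L : Matrix (Fin n) (Fin n) ℚ := Matrix.of fun s t => ((s : ℕ).choose t : ℚ) with hL
  set K : Matrix (Fin n) (Fin n) ℚ :=
    Matrix.of fun s t => (-1 : ℚ) ^ ((s : ℕ) + t) * ((s : ℕ).choose t : ℚ) with hK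
  set Δ : Matrix (Fin n) (Fin n) ℚ := diagonal fun m => (2 : ℚ) ^ (m : ℕ) with hΔ
  set E : Matrix (Fin n) (Fin n) ℚ := diagonal fun m => ((2 : ℚ) ^ (m : ℕ))⁻¹ with hE
  have hD : (Matrix.of fun s t : Fin n => (delannoy s t : ℚ)) = L * Δ * Lᵀ := by
    ext s t
    obtain ⟨M, rfl⟩ := Nat.exists_eq_succ_of_ne_zero (by have := s.2; omega : n ≠ 0)
    rw [of_apply, delannoy_eq_sum_s3 _ _ M (by have := s.2; omega), Finset.sum_range, mul_apply]
    refine Finset.sum_congr rfl fun m _ => ?_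
    simp only [hΔ, mul_diagonal, hL, of_apply, transpose_apply]
    ring
  have hB : (Matrix.of fun s t : Fin n => ∑ k : Fin n,
      (-1 : ℚ) ^ ((s : ℕ) + t) * ((k : ℕ).choose s : ℚ) * ((k : ℕ).choose t : ℚ) / 2 ^ (k : ℕ))
      = Kᵀ * E * K := by
    ext s t
    rw [of_apply, mul_apply]
    refine Finset.sum_congr rfl fun m _ => ?_
    simp only [hE, mul_diagonal, hK, of_apply, transpose_apply]
    have h1 : (-1 : ℚ) ^ (m : ℕ) * (-1) ^ (m : ℕ) = 1 := by rw [← mul_pow]; simp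
    rw [pow_add, pow_add, pow_add]
    linear_combination (-((-1 : ℚ) ^ (s : ℕ) * (-1) ^ (t : ℕ) * ((m : ℕ).choose s : ℚ)
      * ((m : ℕ).choose t : ℚ) * ((2 : ℚ) ^ (m : ℕ))⁻¹)) * h1
  have hKL : K * L = 1 := by
    ext s t
    have h := alternating_sum_choose_mul_choose n s t s.2
    rw [Finset.sum_range] at h
    have h1 : (-1 : ℚ) ^ (s : ℕ) * (-1) ^ (s : ℕ) = 1 := by rw [← mul_pow]; simp
    calc (K * L) s t = (-1) ^ (s : ℕ) * ∑ k : Fin n,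
          (-1 : ℚ) ^ (k : ℕ) * ((s : ℕ).choose k : ℚ) * ((k : ℕ).choose t : ℚ) := by
          rw [mul_apply, Finset.mul_sum]
          refine Finset.sum_congr rfl fun k _ => ?_
          simp only [hK, hL, of_apply]
          ring
      _ = (1 : Matrix (Fin n) (Fin n) ℚ) s t := by
          rw [h, one_apply]
          by_cases hst : s = t
          · subst hst; simp [h1]
          · simp [hst, Fin.val_inj]
  have hEΔ : E * Δ = 1 := by
    rw [hE, hΔ, diagonal_mul_diagonal, ← diagonal_one]
    congr 1
    ext m
    exact inv_mul_cancel₀ (by positivity)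
  have hLK : Lᵀ * Kᵀ = 1 := by rw [← transpose_mul, hKL, transpose_one]
  have hKLt : Kᵀ * Lᵀ = 1 := mul_eq_one_comm.mp hLK
  rw [hD, hB]
  refine inv_eq_left_inv ?_
  calc Kᵀ * E * K * (L * Δ * Lᵀ) = Kᵀ * (E * (K * L) * Δ) * Lᵀ := by
        simp only [Matrix.mul_assoc]
    _ = 1 := by rw [hKL, Matrix.mul_one, hEΔ, Matrix.mul_one, hKLt]

/-- For fixed `i, j`, the partial sums `S(n,i,j)` tend to the Delannoy number `D(i,j)` as
`n → ∞`; consequently, the fixed-position entry `(i,j)` of the inverse Delannoy matrix tends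
to `2 (−1)^{i+j} D(i,j)`. -/
theorem delannoy_series_and_inverse_entries_limit (i j : ℕ) :
    Tendsto (fun n => delannoyPartialSum n i j) atTop (nhds (delannoy i j : ℝ)) ∧
    Tendsto (fun n : ℕ =>
        if h : i < n ∧ j < n then
          (((Matrix.of fun s t : Fin n => (delannoy s t : ℚ))⁻¹ ⟨i, h.1⟩ ⟨j, h.2⟩ : ℚ) : ℝ)
        else 0)
      atTop (nhds (2 * (-1) ^ (i + j) * (delannoy i j : ℝ))) := by
  refine ⟨tendsto_partialSum i j, ?_⟩
  refine ((tendsto_partialSum i j).const_mul (2 * (-1) ^ (i + j))).congr' ?_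
  filter_upwards [eventually_gt_atTop i, eventually_gt_atTop j] with n hi hj
  rw [dif_pos ⟨hi, hj⟩, inv_delannoy_matrix, Matrix.of_apply, delannoyPartialSum,
    Finset.sum_range, Finset.mul_sum, Rat.cast_sum]
  refine Finset.sum_congr rfl fun k _ => ?_
  push_cast
  field_simp
  ring
end

section
/- Let 0 < a, b < 1 be real numbers and let x, y : ℕ → ℕ be sequences with x(n)/n → a and y(n)/n → b as n → ∞. If (1−a)(1−b) > 1/2, then S(n, x(n), y(n)) / D(x(n), y(n)) → 1 as n → ∞; if (1−a)(1−b) < 1/2, then S(n, x(n), y(n)) / D(x(n), y(n)) → 0 as n → ∞. -/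
/-!
Write `t k = C(k,x) C(k,y) / 2^(k+1)`. Pascal's rule gives `∑_{k ≥ 0} t k = D(x,y)`, because both
sides satisfy the same recurrence and boundary conditions (`hasSum_delannoyTerm`). Hence `S(n,x,y)`
is a partial sum of a series of nonnegative terms with total `D(x,y)`.

Consecutive terms satisfy `2 (k+1-x) (k+1-y) * t (k+1) = (k+1)^2 * t k`, so near `k = n` their
ratio is close to `1 / (2 (1-a) (1-b))`.

If this number is below `1`, then for every fixed `M` the terms with index at least `n - M` decay
geometrically with some ratio `r < 1`. Shifting the tail `M` times gives
`D - S(n) ≤ r^M D` for large `n`. If it is above `1`, then all terms with index at most `n + M` grow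
geometrically with some ratio `r⁻¹ > 1`, and `S(n) ≤ r^M S(n+M) ≤ r^M D` for large `n`. As `M` is
arbitrary, the limits follow.
-/

open Filter

/-- The summand `C(k,x) C(k,y) / 2^(k+1)` of the partial sums. -/
noncomputable def delannoyTerm (x y k : ℕ) : ℝ :=
  (Nat.choose k x : ℝ) * (Nat.choose k y : ℝ) / 2 ^ (k + 1)

lemma delannoyTerm_nonneg (x y k : ℕ) : 0 ≤ delannoyTerm x y k := by
  unfold delannoyTerm; positivity

lemma summable_delannoyTerm (x y : ℕ) : Summable (delannoyTerm x y) := by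
  have h : Summable (fun k : ℕ => (k : ℝ) ^ (x + y) * (1 / 2 : ℝ) ^ k) :=
    summable_pow_mul_geometric_of_norm_lt_one (x + y) (by norm_num)
  refine Summable.of_nonneg_of_le (delannoyTerm_nonneg x y) (fun k => ?_) h
  have hx : (Nat.choose k x : ℝ) ≤ (k : ℝ) ^ x := by exact_mod_cast Nat.choose_le_pow k x
  have hy : (Nat.choose k y : ℝ) ≤ (k : ℝ) ^ y := by exact_mod_cast Nat.choose_le_pow k y
  unfold delannoyTerm
  rw [one_div, inv_pow, ← div_eq_mul_inv]
  refine div_le_div₀ (by positivity) ?_ (by positivity)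
    (pow_le_pow_right₀ one_le_two (Nat.le_succ k))
  rw [pow_add]
  exact mul_le_mul hx hy (by positivity) (by positivity)

/-- The full series satisfies the Delannoy recurrence: apply Pascal's rule to both binomials and
shift the index; the series on the left then reappears on the right with weight `1/2`. -/
lemma tsum_delannoyTerm_succ_succ (x y : ℕ) :
    ∑' k, delannoyTerm (x + 1) (y + 1) k =
      ∑' k, delannoyTerm x (y + 1) k + ∑' k, delannoyTerm (x + 1) y k
        + ∑' k, delannoyTerm x y k := by
  have e : ∀ k, delannoyTerm (x + 1) (y + 1) (k + 1) =
      1 / 2 * (((delannoyTerm x (y + 1) k + delannoyTerm (x + 1) y k) + delannoyTerm x y k)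
        + delannoyTerm (x + 1) (y + 1) k) := by
    intro k
    simp only [delannoyTerm, Nat.choose_succ_succ', Nat.cast_add]
    field_simp
    ring
  have h0 : delannoyTerm (x + 1) (y + 1) 0 = 0 := by simp [delannoyTerm]
  have h := (summable_delannoyTerm (x + 1) (y + 1)).tsum_eq_zero_add
  have s1 := summable_delannoyTerm x (y + 1)
  have s2 := summable_delannoyTerm (x + 1) y
  have s3 := summable_delannoyTerm x y
  have s4 := summable_delannoyTerm (x + 1) (y + 1)
  simp only [e] at h
  rw [h0, tsum_mul_left, ((s1.add s2).add s3).tsum_add s4, (s1.add s2).tsum_add s3,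
    s1.tsum_add s2] at h
  linarith

lemma delannoyTerm_comm (x y : ℕ) : delannoyTerm x y = delannoyTerm y x := by
  funext k; unfold delannoyTerm; ring

lemma tsum_delannoyTerm_zero_left (y : ℕ) : ∑' k, delannoyTerm 0 y k = 1 := by
  induction y with
  | zero =>
    have : delannoyTerm 0 0 = fun k : ℕ => 1 / 2 * (1 / 2 : ℝ) ^ k := by
      funext k; simp [delannoyTerm, pow_succ, mul_comm]
    rw [this, tsum_mul_left, tsum_geometric_two]
    norm_num
  | succ y ih =>
    have e : ∀ k, delannoyTerm 0 (y + 1) (k + 1) =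
        1 / 2 * (delannoyTerm 0 y k + delannoyTerm 0 (y + 1) k) := by
      intro k
      simp only [delannoyTerm, Nat.choose_succ_succ', Nat.choose_zero_right, Nat.cast_add]
      field_simp
      ring
    have h0 : delannoyTerm 0 (y + 1) 0 = 0 := by simp [delannoyTerm]
    have h := (summable_delannoyTerm 0 (y + 1)).tsum_eq_zero_add
    simp only [e] at h
    rw [h0, tsum_mul_left,
      (summable_delannoyTerm 0 y).tsum_add (summable_delannoyTerm 0 (y + 1)), ih] at h
    linarith

lemma tsum_delannoyTerm (x y : ℕ) : ∑' k, delannoyTerm x y k = (delannoy x y : ℝ) := by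
  induction x, y using delannoy.induct with
  | case1 y => simp [delannoy, tsum_delannoyTerm_zero_left]
  | case2 x => rw [delannoyTerm_comm, tsum_delannoyTerm_zero_left]; simp [delannoy]
  | case3 x y h1 h2 h3 =>
    rw [tsum_delannoyTerm_succ_succ, h1, h2, h3]; simp [delannoy]

lemma hasSum_delannoyTerm (x y : ℕ) : HasSum (delannoyTerm x y) (delannoy x y : ℝ) :=
  tsum_delannoyTerm x y ▸ (summable_delannoyTerm x y).hasSum

lemma delannoy_pos (x y : ℕ) : 0 < delannoy x y := by
  induction x, y using delannoy.induct with
  | case1 y => simp [delannoy]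
  | case2 x => simp [delannoy]
  | case3 x y h1 h2 h3 => rw [delannoy]; omega

lemma delannoyPartialSum_eq (n x y : ℕ) :
    delannoyPartialSum n x y = ∑ k ∈ Finset.range n, delannoyTerm x y k := rfl

lemma delannoyPartialSum_nonneg (n x y : ℕ) : 0 ≤ delannoyPartialSum n x y :=
  Finset.sum_nonneg fun k _ => delannoyTerm_nonneg x y k

lemma delannoyPartialSum_le (n x y : ℕ) : delannoyPartialSum n x y ≤ delannoy x y :=
  sum_le_hasSum _ (fun k _ => delannoyTerm_nonneg x y k) (hasSum_delannoyTerm x y)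

lemma choose_succ_mul_sub (k x : ℕ) :
    (Nat.choose (k + 1) x : ℝ) * ((k : ℝ) + 1 - x) = Nat.choose k x * ((k : ℝ) + 1) := by
  rcases le_or_gt x (k + 1) with h | h
  · have := Nat.choose_mul_succ_eq k x
    have h' : (((k + 1 - x : ℕ)) : ℝ) = (k : ℝ) + 1 - x := by push_cast [Nat.cast_sub h]; ring
    rw [← h']
    exact_mod_cast this.symm
  · rw [Nat.choose_eq_zero_of_lt h, Nat.choose_eq_zero_of_lt (by omega : k < x)]; simp

lemma delannoyTerm_succ_mul (x y k : ℕ) :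
    2 * (((k : ℝ) + 1 - x) * ((k : ℝ) + 1 - y)) * delannoyTerm x y (k + 1) =
      ((k : ℝ) + 1) ^ 2 * delannoyTerm x y k := by
  have hx := choose_succ_mul_sub k x
  have hy := choose_succ_mul_sub k y
  have : 2 * (((k : ℝ) + 1 - x) * ((k : ℝ) + 1 - y)) * delannoyTerm x y (k + 1) =
      ((Nat.choose (k + 1) x : ℝ) * ((k : ℝ) + 1 - x)) *
        ((Nat.choose (k + 1) y : ℝ) * ((k : ℝ) + 1 - y)) / 2 ^ (k + 1) := by
    unfold delannoyTerm; field_simp; ring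
  rw [this, hx, hy]
  unfold delannoyTerm; ring

/-- Consecutive terms shrink by a factor of at least `2 (1-α) (1-β)` at indices where
`x ≤ α (k+1)` and `y ≤ β (k+1)`. -/
lemma delannoyTerm_succ_le {α β : ℝ} (hα : α < 1) (hβ : β < 1) {x y k : ℕ}
    (hx : (x : ℝ) ≤ α * (k + 1)) (hy : (y : ℝ) ≤ β * (k + 1)) :
    2 * ((1 - α) * (1 - β)) * delannoyTerm x y (k + 1) ≤ delannoyTerm x y k := by
  have hk : (0 : ℝ) < (k : ℝ) + 1 := by positivity
  have h : ((1 - α) * ((k : ℝ) + 1)) * ((1 - β) * ((k : ℝ) + 1)) ≤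
      ((k : ℝ) + 1 - x) * ((k : ℝ) + 1 - y) := by
    apply mul_le_mul
    · linarith
    · linarith
    · exact mul_nonneg (by linarith) hk.le
    · nlinarith
  have h2 := mul_le_mul_of_nonneg_right h (delannoyTerm_nonneg x y (k + 1))
  have h3 := delannoyTerm_succ_mul x y k
  have hk2 : (0 : ℝ) < ((k : ℝ) + 1) ^ 2 := by positivity
  refine le_of_mul_le_mul_left ?_ hk2
  nlinarith

/-- The reverse of `delannoyTerm_succ_le`, at indices where `α (k+1) ≤ x` and
`β (k+1) ≤ y`. -/
lemma delannoyTerm_le_succ {α β : ℝ} {x y k : ℕ}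
    (hx : α * (k + 1) ≤ (x : ℝ)) (hy : β * (k + 1) ≤ (y : ℝ)) :
    delannoyTerm x y k ≤ 2 * ((1 - α) * (1 - β)) * delannoyTerm x y (k + 1) := by
  have hk : (0 : ℝ) < (k : ℝ) + 1 := by positivity
  have hk2 : (0 : ℝ) < ((k : ℝ) + 1) ^ 2 := by positivity
  have h3 := delannoyTerm_succ_mul x y k
  by_cases hxy : x ≤ k + 1 ∧ y ≤ k + 1
  · have hx' : (x : ℝ) ≤ k + 1 := by exact_mod_cast hxy.1
    have hy' : (y : ℝ) ≤ k + 1 := by exact_mod_cast hxy.2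
    have h : ((k : ℝ) + 1 - x) * ((k : ℝ) + 1 - y) ≤
        ((1 - α) * ((k : ℝ) + 1)) * ((1 - β) * ((k : ℝ) + 1)) := by
      apply mul_le_mul
      · linarith
      · linarith
      · linarith
      · linarith
    have h2 := mul_le_mul_of_nonneg_right h (delannoyTerm_nonneg x y (k + 1))
    refine le_of_mul_le_mul_left ?_ hk2
    nlinarith
  · -- One of the binomials vanishes at both `k` and `k + 1`.
    have hz : delannoyTerm x y k = 0 ∧ delannoyTerm x y (k + 1) = 0 := by
      rcases not_and_or.mp hxy with h | h
      · simp [delannoyTerm, Nat.choose_eq_zero_of_lt (by omega : k < x),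
          Nat.choose_eq_zero_of_lt (by omega : k + 1 < x)]
      · simp [delannoyTerm, Nat.choose_eq_zero_of_lt (by omega : k < y),
          Nat.choose_eq_zero_of_lt (by omega : k + 1 < y)]
    rw [hz.1, hz.2]; simp

/-- Geometric decay of the terms with index at least `m` bounds the tail after index `m + M`. -/
lemma delannoy_sub_partialSum_le {r : ℝ} (hr : 0 ≤ r) {x y m : ℕ}
    (h : ∀ k, m ≤ k → delannoyTerm x y (k + 1) ≤ r * delannoyTerm x y k) (M : ℕ) :
    (delannoy x y : ℝ) - delannoyPartialSum (m + M) x y ≤ r ^ M * delannoy x y := by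
  have hs := summable_delannoyTerm x y
  have tail : ∀ j, (delannoy x y : ℝ) - delannoyPartialSum j x y
      = ∑' k, delannoyTerm x y (k + j) := by
    intro j
    have := hs.sum_add_tsum_nat_add j
    rw [tsum_delannoyTerm] at this
    rw [delannoyPartialSum_eq]; linarith
  induction M with
  | zero => simpa using delannoyPartialSum_nonneg m x y
  | succ M ih =>
    have step : ∑' k, delannoyTerm x y (k + (m + (M + 1))) ≤
        r * ∑' k, delannoyTerm x y (k + (m + M)) := by
      rw [← tsum_mul_left]
      refine Summable.tsum_le_tsum (fun k => ?_) ((summable_nat_add_iff _).2 hs)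
        (((summable_nat_add_iff _).2 hs).mul_left r)
      exact h (k + (m + M)) (by omega)
    rw [tail] at ih ⊢
    calc _ ≤ _ := step
      _ ≤ r * (r ^ M * delannoy x y) := by gcongr
      _ = _ := by ring

/-- Geometric growth of the terms up to index `n + M` bounds the partial sum up to `n`. -/
lemma partialSum_le_pow_mul {r : ℝ} (hr : 0 ≤ r) {x y n M : ℕ}
    (h : ∀ k, k < n + M → delannoyTerm x y k ≤ r * delannoyTerm x y (k + 1)) :
    delannoyPartialSum n x y ≤ r ^ M * delannoy x y := by
  have step : ∀ j, j ≤ n + M →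
      delannoyPartialSum j x y ≤ r * delannoyPartialSum (j + 1) x y := by
    intro j hj
    rw [delannoyPartialSum_eq, delannoyPartialSum_eq, Finset.sum_range_succ', mul_add,
      Finset.mul_sum]
    have h1 : ∑ k ∈ Finset.range j, delannoyTerm x y k ≤
        ∑ k ∈ Finset.range j, r * delannoyTerm x y (k + 1) :=
      Finset.sum_le_sum fun k hk => h k (by have := Finset.mem_range.1 hk; omega)
    have h2 := mul_nonneg hr (delannoyTerm_nonneg x y 0)
    linarith
  have key : ∀ i, i ≤ M → delannoyPartialSum n x y ≤ r ^ i * delannoyPartialSum (n + i) x y := by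
    intro i
    induction i with
    | zero => intro _; simp
    | succ i ih =>
      intro hi
      calc _ ≤ r ^ i * delannoyPartialSum (n + i) x y := ih (by omega)
        _ ≤ r ^ i * (r * delannoyPartialSum (n + i + 1) x y) := by
          gcongr; exact step _ (by omega)
        _ = _ := by rw [pow_succ, mul_assoc, add_assoc]
  exact (key M le_rfl).trans (by gcongr; exact delannoyPartialSum_le _ _ _)

lemma tendsto_zero_of_eventually_le_pow {u : ℕ → ℝ} {r : ℝ} (hr1 : r < 1)
    (h0 : ∀ n, 0 ≤ u n) (h : ∀ M : ℕ, ∀ᶠ n in atTop, u n ≤ r ^ M) :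
    Tendsto u atTop (nhds 0) := by
  refine tendsto_order.2 ⟨fun c hc => Eventually.of_forall fun n => hc.trans_le (h0 n),
    fun c hc => ?_⟩
  obtain ⟨M, hM⟩ := exists_pow_lt_of_lt_one hc hr1
  filter_upwards [h M] with n hn using hn.trans_lt hM

/-- A shift by a constant `c` does not affect the limit of `z n / n`. -/
lemma tendsto_add_const_div {z : ℕ → ℕ} {a : ℝ}
    (hz : Tendsto (fun n => (z n : ℝ) / n) atTop (nhds a)) (c : ℝ) :
    Tendsto (fun n => ((z n : ℝ) + c) / n) atTop (nhds a) := by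
  simpa [add_div] using hz.add (tendsto_const_div_atTop_nhds_zero_nat c)

lemma eventually_le_mul_sub {z : ℕ → ℕ} {a α : ℝ}
    (hz : Tendsto (fun n => (z n : ℝ) / n) atTop (nhds a)) (h : a < α) (M : ℕ) :
    ∀ᶠ n : ℕ in atTop, (z n : ℝ) ≤ α * ((n : ℝ) - M) := by
  filter_upwards [(tendsto_add_const_div hz (α * M)).eventually_lt_const h,
    eventually_gt_atTop 0] with n hn hpos
  rw [div_lt_iff₀ (by exact_mod_cast hpos)] at hn
  linarith

lemma eventually_mul_add_le {z : ℕ → ℕ} {a α : ℝ}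
    (hz : Tendsto (fun n => (z n : ℝ) / n) atTop (nhds a)) (h : α < a) (M : ℕ) :
    ∀ᶠ n : ℕ in atTop, α * ((n : ℝ) + M) ≤ (z n : ℝ) := by
  filter_upwards [(tendsto_add_const_div hz (-(α * M))).eventually_const_lt h,
    eventually_gt_atTop 0] with n hn hpos
  rw [lt_div_iff₀ (by exact_mod_cast hpos)] at hn
  linarith

/-- Lemma 4.1(a): if `x(n)/n → a` and `y(n)/n → b` with `0 < a, b < 1`, then
`S(n, x(n), y(n)) / D(x(n), y(n))` tends to `1` if `(1−a)(1−b) > 1/2`, and to `0` if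
`(1−a)(1−b) < 1/2`. -/
theorem delannoyPartialSum_div_delannoy_limit (a b : ℝ)
    (ha0 : 0 < a) (ha1 : a < 1) (hb0 : 0 < b) (hb1 : b < 1)
    (x y : ℕ → ℕ)
    (hx : Tendsto (fun n => (x n : ℝ) / n) atTop (nhds a))
    (hy : Tendsto (fun n => (y n : ℝ) / n) atTop (nhds b)) :
    ((1 - a) * (1 - b) > 1 / 2 →
      Tendsto (fun n => delannoyPartialSum n (x n) (y n) / (delannoy (x n) (y n) : ℝ))
        atTop (nhds 1)) ∧
    ((1 - a) * (1 - b) < 1 / 2 →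
      Tendsto (fun n => delannoyPartialSum n (x n) (y n) / (delannoy (x n) (y n) : ℝ))
        atTop (nhds 0)) := by
  have hD : ∀ n, (0 : ℝ) < delannoy (x n) (y n) := fun n => by exact_mod_cast delannoy_pos _ _
  constructor
  · intro hab
    -- Enlarge `a` and `b` slightly, keeping the strict inequality.
    obtain ⟨s, ⟨hs1, hsa, hsb⟩, hs0⟩ : ∃ s : ℝ,
        (1 / 2 < (1 - (a + s)) * (1 - (b + s)) ∧ a + s < 1 ∧ b + s < 1) ∧ 0 < s := by
      have c : ∀ᶠ s : ℝ in nhds 0,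
          1 / 2 < (1 - (a + s)) * (1 - (b + s)) ∧ a + s < 1 ∧ b + s < 1 := by
        refine (ContinuousAt.eventually_lt (by fun_prop) (by fun_prop) (by simpa using hab)).and
          ((ContinuousAt.eventually_lt (by fun_prop) (by fun_prop) (by simpa using ha1)).and
          (ContinuousAt.eventually_lt (by fun_prop) (by fun_prop) (by simpa using hb1)))
      exact ((c.filter_mono nhdsWithin_le_nhds).and
        (self_mem_nhdsWithin : Set.Ioi (0 : ℝ) ∈ nhdsWithin 0 (Set.Ioi 0))).exists
    set q : ℝ := 2 * ((1 - (a + s)) * (1 - (b + s))) with hq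
    have hq1 : 1 < q := by linarith
    have hr0 : 0 ≤ q⁻¹ := by positivity
    have key : Tendsto (fun n => 1 - delannoyPartialSum n (x n) (y n) / (delannoy (x n) (y n) : ℝ))
        atTop (nhds 0) := by
      refine tendsto_zero_of_eventually_le_pow (inv_lt_one_of_one_lt₀ hq1) (fun n => ?_)
        (fun M => ?_)
      · rw [sub_nonneg, div_le_one (hD n)]
        exact delannoyPartialSum_le _ _ _
      · filter_upwards [eventually_le_mul_sub hx (show a < a + s by linarith) M,
          eventually_le_mul_sub hy (show b < b + s by linarith) M,
          eventually_ge_atTop M] with n hxn hyn hn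
        have hb := delannoy_sub_partialSum_le (x := x n) (y := y n) (m := n - M) hr0 (by
          intro k hk
          have hk' : (n : ℝ) - M ≤ (k : ℝ) + 1 := by
            have : (n : ℝ) ≤ k + 1 + M := by exact_mod_cast (by omega : n ≤ k + 1 + M)
            linarith
          have h1 := delannoyTerm_succ_le hsa hsb (x := x n) (y := y n) (k := k)
            (hxn.trans (mul_le_mul_of_nonneg_left hk' (by linarith)))
            (hyn.trans (mul_le_mul_of_nonneg_left hk' (by linarith)))
          rw [inv_mul_eq_div, le_div_iff₀ (by linarith), mul_comm]
          exact h1) M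
        rw [Nat.sub_add_cancel hn] at hb
        rw [one_sub_div (hD n).ne', div_le_iff₀ (hD n)]
        exact hb
    simpa using key.const_sub 1
  · intro hab
    -- Shrink `a` and `b` slightly, keeping the strict inequality.
    obtain ⟨s, ⟨hs1, hsa, hsb⟩, hs0⟩ : ∃ s : ℝ,
        ((1 - (a - s)) * (1 - (b - s)) < 1 / 2 ∧ 0 < a - s ∧ 0 < b - s) ∧ 0 < s := by
      have c : ∀ᶠ s : ℝ in nhds 0,
          (1 - (a - s)) * (1 - (b - s)) < 1 / 2 ∧ 0 < a - s ∧ 0 < b - s := by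
        refine (ContinuousAt.eventually_lt (by fun_prop) (by fun_prop) (by simpa using hab)).and
          ((ContinuousAt.eventually_lt (by fun_prop) (by fun_prop) (by simpa using ha0)).and
          (ContinuousAt.eventually_lt (by fun_prop) (by fun_prop) (by simpa using hb0)))
      exact ((c.filter_mono nhdsWithin_le_nhds).and
        (self_mem_nhdsWithin : Set.Ioi (0 : ℝ) ∈ nhdsWithin 0 (Set.Ioi 0))).exists
    have hr0 : 0 ≤ 2 * ((1 - (a - s)) * (1 - (b - s))) :=
      mul_nonneg zero_le_two (mul_nonneg (by linarith) (by linarith))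
    refine tendsto_zero_of_eventually_le_pow
      (show 2 * ((1 - (a - s)) * (1 - (b - s))) < 1 by linarith)
      (fun n => div_nonneg (delannoyPartialSum_nonneg _ _ _) (hD n).le) (fun M => ?_)
    filter_upwards [eventually_mul_add_le hx (show a - s < a by linarith) M,
      eventually_mul_add_le hy (show b - s < b by linarith) M] with n hxn hyn
    rw [div_le_iff₀ (hD n)]
    refine partialSum_le_pow_mul hr0 fun k hk => ?_
    have hk' : (k : ℝ) + 1 ≤ (n : ℝ) + M := by exact_mod_cast hk
    refine delannoyTerm_le_succ ?_ ?_
    · exact (mul_le_mul_of_nonneg_left hk' hsa.le).trans hxn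
    · exact (mul_le_mul_of_nonneg_left hk' hsb.le).trans hyn
end

section
/- Let 0 < a, b < 1 with (1−a)(1−b) ≠ 1/2, and let x, y : ℕ → ℕ be sequences with x(n)/n → a and y(n)/n → b as n → ∞. Then (1/n)·log S(n, x(n), y(n)) converges, as n → ∞, to f(a,b), where f(a,b) = b·log(a/b + √(1 + a²/b²)) + a·log(b/a + √(1 + b²/a²)) if (1−a)(1−b) > 1/2, and f(a,b) = −log(2 · a^a · b^b · (1−a)^{1−a} · (1−b)^{1−b}) if (1−a)(1−b) < 1/2. -/
/-! The limit is the exponential rate of the largest term of the sum. With `k = tn`, `x = an`,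
`y = bn` the rate of `C(k,x) C(k,y) 2^{-k}` is concave in `t`, and it is maximal over `t ≤ 1` either
at the critical point `t = a + b + √(a² + b²)`, where `t² = 2(t-a)(t-b)` (this is `< 1` exactly when
`(1-a)(1-b) > 1/2`), or at the endpoint `t = 1`. Both regimes are instances of
`tendsto_log_delannoyPartialSum`, in which `Q = t² / (2(t-a)(t-b)) ≥ 1` and either `t = 1` or
`Q = 1`.

The upper bound needs no Stirling: `C(k,x) u^x ≤ (1+u)^k` with the tilts `u = a/(t-a)`,
`v = b/(t-b)` gives `(1+u)(1+v)/2 = Q`, hence `S ≤ n Q^n u^{-x} v^{-y}`. The lower bound keeps the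
single term `k = ⌊tn⌋ - 1`, whose rate follows from Stirling's formula (`tendsto_log_choose`). -/

open Filter Real

lemma tendsto_log_nat_div : Tendsto (fun n : ℕ => Real.log n / n) atTop (nhds 0) :=
  Real.isLittleO_log_id_atTop.tendsto_div_nhds_zero.comp tendsto_natCast_atTop_atTop

/-- Weak Stirling formula: `log n! = n log n - n + o(n)`. -/
lemma tendsto_log_factorial_defect :
    Tendsto (fun n : ℕ => (Real.log (n.factorial) - n * Real.log n + n) / n) atTop (nhds 0) := by
  have h1 : Tendsto (fun n : ℕ => Real.log (Stirling.stirlingSeq n)) atTop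
      (nhds (Real.log (√π))) :=
    Stirling.tendsto_stirlingSeq_sqrt_pi.log (by positivity)
  have h2 := h1.div_atTop (tendsto_natCast_atTop_atTop (R := ℝ))
  have h3 : Tendsto (fun n : ℕ => 1 / 2 * Real.log 2 / (n : ℝ)) atTop (nhds 0) :=
    tendsto_const_nhds.div_atTop (tendsto_natCast_atTop_atTop (R := ℝ))
  have h4 := (h2.add h3).add (tendsto_log_nat_div.const_mul (1 / 2))
  simp only [add_zero, mul_zero] at h4
  refine h4.congr' ?_
  filter_upwards [eventually_gt_atTop 0] with n hn
  have hn' : (0 : ℝ) < n := by exact_mod_cast hn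
  rw [Stirling.log_stirlingSeq_formula, Real.log_mul two_ne_zero hn'.ne',
    Real.log_div hn'.ne' (Real.exp_pos 1).ne', Real.log_exp]
  field_simp
  ring

lemma tendsto_atTop_of_ratio {m : ℕ → ℕ} {c : ℝ} (hc : 0 < c)
    (hm : Tendsto (fun n => (m n : ℝ) / n) atTop (nhds c)) : Tendsto m atTop atTop := by
  have h := hm.pos_mul_atTop hc (tendsto_natCast_atTop_atTop (R := ℝ))
  rw [← tendsto_natCast_atTop_iff (R := ℝ)]
  refine h.congr' ?_
  filter_upwards [eventually_gt_atTop 0] with n hn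
  have hn' : (0 : ℝ) < n := by exact_mod_cast hn
  field_simp

/-- Rate of `m(n)!` for `m(n) ~ cn`, after removing the superexponential part `(m/n) log n`, which
cancels in binomial coefficients. -/
lemma tendsto_log_factorial {m : ℕ → ℕ} {c : ℝ} (hc : 0 < c)
    (hm : Tendsto (fun n => (m n : ℝ) / n) atTop (nhds c)) :
    Tendsto (fun n : ℕ => Real.log ((m n).factorial) / n - (m n : ℝ) / n * Real.log n) atTop
      (nhds (c * Real.log c - c)) := by
  have hmt := tendsto_atTop_of_ratio hc hm
  have h1 := (hm.mul (tendsto_log_factorial_defect.comp hmt)).add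
    ((hm.mul (hm.log hc.ne')).sub hm)
  simp only [mul_zero, zero_add, Function.comp_apply] at h1
  refine h1.congr' ?_
  filter_upwards [eventually_gt_atTop 0, hmt.eventually_gt_atTop 0] with n hn hmn
  have hn' : (0 : ℝ) < n := by exact_mod_cast hn
  have hm' : (0 : ℝ) < m n := by exact_mod_cast hmn
  rw [Real.log_div hm'.ne' hn'.ne']
  field_simp
  ring

lemma eventually_lt_of_ratio {x k : ℕ → ℕ} {a t : ℝ} (hat : a < t)
    (hx : Tendsto (fun n => (x n : ℝ) / n) atTop (nhds a))
    (hk : Tendsto (fun n => (k n : ℝ) / n) atTop (nhds t)) : ∀ᶠ n in atTop, x n < k n := by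
  filter_upwards [hx.eventually_lt hk hat, eventually_gt_atTop 0] with n h hn
  have hn' : (0 : ℝ) < n := by exact_mod_cast hn
  exact_mod_cast (div_lt_div_iff_of_pos_right hn').1 h

lemma tendsto_log_choose {x k : ℕ → ℕ} {a t : ℝ} (ha : 0 < a) (hat : a < t)
    (hx : Tendsto (fun n => (x n : ℝ) / n) atTop (nhds a))
    (hk : Tendsto (fun n => (k n : ℝ) / n) atTop (nhds t)) :
    Tendsto (fun n : ℕ => Real.log ((k n).choose (x n)) / n) atTop
      (nhds (t * Real.log t - a * Real.log a - (t - a) * Real.log (t - a))) := by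
  have hlt := eventually_lt_of_ratio hat hx hk
  have hd : Tendsto (fun n => ((k n - x n : ℕ) : ℝ) / n) atTop (nhds (t - a)) := by
    refine (hk.sub hx).congr' ?_
    filter_upwards [hlt] with n h
    rw [Nat.cast_sub h.le, sub_div]
  have h1 := ((tendsto_log_factorial (ha.trans hat) hk).sub (tendsto_log_factorial ha hx)).sub
    (tendsto_log_factorial (sub_pos.2 hat) hd)
  have e : t * Real.log t - a * Real.log a - (t - a) * Real.log (t - a) =
      t * Real.log t - t - (a * Real.log a - a) - ((t - a) * Real.log (t - a) - (t - a)) := by ring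
  rw [e]
  refine h1.congr' ?_
  filter_upwards [hlt] with n h
  have hf : ((k n).choose (x n) : ℝ) * (x n).factorial * (k n - x n).factorial
      = (k n).factorial := by exact_mod_cast Nat.choose_mul_factorial_mul_factorial h.le
  have hc : (((k n).choose (x n) : ℕ) : ℝ) ≠ 0 := by
    exact_mod_cast (Nat.choose_pos h.le).ne'
  rw [← hf, Real.log_mul (by positivity) (by positivity), Real.log_mul hc (by positivity),
    Nat.cast_sub h.le]
  ring

lemma choose_mul_pow_le_one_add_pow {u : ℝ} (hu : 0 ≤ u) (k x : ℕ) :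
    (k.choose x : ℝ) * u ^ x ≤ (1 + u) ^ k := by
  rcases lt_or_ge k x with h | h
  · rw [Nat.choose_eq_zero_of_lt h]
    simp only [Nat.cast_zero, zero_mul]
    positivity
  · rw [add_comm, add_pow]
    have := Finset.single_le_sum (f := fun m => u ^ m * 1 ^ (k - m) * (k.choose m : ℝ))
      (fun i _ => by positivity) (Finset.mem_range.2 (Nat.lt_succ_of_le h))
    simpa [mul_comm] using this

lemma delannoyPartialSum_mul_le {u v Q : ℝ} (hu : 0 < u) (hv : 0 < v) (hQ : 1 ≤ Q)
    (huv : (1 + u) * (1 + v) = 2 * Q) (n x y : ℕ) :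
    delannoyPartialSum n x y * (u ^ x * v ^ y) ≤ n * Q ^ n := by
  rw [delannoyPartialSum, Finset.sum_mul, ← nsmul_eq_mul]
  conv_rhs => rw [← Finset.card_range n]
  refine Finset.sum_le_card_nsmul _ _ _ fun k hk => ?_
  rw [Finset.card_range]
  have hp : (2 : ℝ) ^ k ≤ 2 ^ (k + 1) := pow_le_pow_right₀ one_le_two k.le_succ
  calc (k.choose x : ℝ) * (k.choose y : ℝ) / 2 ^ (k + 1) * (u ^ x * v ^ y)
      = (k.choose x * u ^ x) * (k.choose y * v ^ y) / 2 ^ (k + 1) := by ring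
    _ ≤ (1 + u) ^ k * (1 + v) ^ k / 2 ^ k := by
        gcongr ?_ * ?_ / ?_
        · exact choose_mul_pow_le_one_add_pow hu.le k x
        · exact choose_mul_pow_le_one_add_pow hv.le k y
    _ = Q ^ k := by
        rw [← mul_pow, huv, mul_pow]
        field_simp
    _ ≤ Q ^ n := pow_le_pow_right₀ hQ (Finset.mem_range.1 hk).le

/-- A sequence of summation indices `k(n) < n` with `k(n) ~ tn`, also for `t = 1`. -/
lemma exists_index_ratio {t : ℝ} (ht0 : 0 < t) (ht1 : t ≤ 1) :
    ∃ k : ℕ → ℕ, (∀ n, 0 < n → k n < n) ∧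
      Tendsto (fun n => (k n : ℝ) / n) atTop (nhds t) := by
  refine ⟨fun n => ⌊t * n⌋₊ - 1, fun n hn => ?_, ?_⟩
  · have : ⌊t * n⌋₊ ≤ n := by
      apply Nat.floor_le_of_le
      nlinarith [(Nat.cast_nonneg n : (0 : ℝ) ≤ n)]
    lia
  · have h1 := (tendsto_nat_floor_mul_div_atTop (R := ℝ) ht0.le).comp
      (tendsto_natCast_atTop_atTop (R := ℝ))
    have h2 := h1.sub (tendsto_const_nhds (x := (1 : ℝ)).div_atTop
      (tendsto_natCast_atTop_atTop (R := ℝ)))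
    rw [sub_zero] at h2
    refine h2.congr' ?_
    have h3 := tendsto_nat_floor_atTop.comp
      ((tendsto_natCast_atTop_atTop (R := ℝ)).const_mul_atTop ht0)
    filter_upwards [h3.eventually_ge_atTop 1] with n hn
    simp only [Function.comp_apply] at hn ⊢
    rw [Nat.cast_sub hn, sub_div, Nat.cast_one]

/-- Both regimes at once: `t` is the location of the dominant term, `Q` the growth rate per step of
the tilted summands. The hypothesis `t = 1 ∨ Q = 1` makes the upper and lower bounds agree. -/
lemma tendsto_log_delannoyPartialSum {a b t Q : ℝ} (ha : 0 < a) (hb : 0 < b)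
    (hat : a < t) (hbt : b < t) (ht1 : t ≤ 1) (hQ : 1 ≤ Q)
    (hQt : t ^ 2 = 2 * Q * ((t - a) * (t - b))) (hcase : t = 1 ∨ Q = 1)
    {x y : ℕ → ℕ}
    (hx : Tendsto (fun n => (x n : ℝ) / n) atTop (nhds a))
    (hy : Tendsto (fun n => (y n : ℝ) / n) atTop (nhds b)) :
    Tendsto (fun n : ℕ => (1 / (n : ℝ)) * Real.log (delannoyPartialSum n (x n) (y n)))
      atTop (nhds (Real.log Q - a * Real.log (a / (t - a)) - b * Real.log (b / (t - b)))) := by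
  have ht0 : 0 < t := ha.trans hat
  have hta : 0 < t - a := sub_pos.2 hat
  have htb : 0 < t - b := sub_pos.2 hbt
  have hQ0 : 0 < Q := by linarith
  obtain ⟨k, hkn, hk⟩ := exists_index_ratio ht0 ht1
  have hxk := eventually_lt_of_ratio hat hx hk
  have hyk := eventually_lt_of_ratio hbt hy hk
  have hinv : Tendsto (fun n : ℕ => 1 / (n : ℝ)) atTop (nhds 0) :=
    tendsto_const_nhds.div_atTop (tendsto_natCast_atTop_atTop (R := ℝ))
  have hu : 0 < a / (t - a) := by positivity
  have hv : 0 < b / (t - b) := by positivity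
  have huv : (1 + a / (t - a)) * (1 + b / (t - b)) = 2 * Q := by
    field_simp
    linarith
  have hlow := ((tendsto_log_choose ha hat hx hk).add (tendsto_log_choose hb hbt hy hk)).sub
    ((hk.add hinv).mul_const (Real.log 2))
  have hup := ((tendsto_log_nat_div.add_const (Real.log Q)).sub
    (hx.mul_const (Real.log (a / (t - a))))).sub (hy.mul_const (Real.log (b / (t - b))))
  have hlogQ : 2 * Real.log t = Real.log 2 + Real.log Q + Real.log (t - a) + Real.log (t - b) := by
    have := congrArg Real.log hQt
    rw [Real.log_pow, Real.log_mul (by positivity) (by positivity), Real.log_mul (by positivity)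
      (by positivity), Real.log_mul (by positivity) (by positivity)] at this
    push_cast at this
    linarith
  have hcase' : (1 - t) * Real.log Q = 0 := by
    rcases hcase with h | h <;> simp [h]
  have hpos : ∀ᶠ n in atTop, 0 < n ∧
      (0 : ℝ) < (k n).choose (x n) * (k n).choose (y n) / 2 ^ (k n + 1) ∧
      ((k n).choose (x n) * (k n).choose (y n) / 2 ^ (k n + 1) : ℝ) ≤
        delannoyPartialSum n (x n) (y n) := by
    filter_upwards [hxk, hyk, eventually_gt_atTop 0] with n h1 h2 hn
    have c1 : (0 : ℝ) < (k n).choose (x n) := by exact_mod_cast Nat.choose_pos h1.le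
    have c2 : (0 : ℝ) < (k n).choose (y n) := by exact_mod_cast Nat.choose_pos h2.le
    refine ⟨hn, by positivity, ?_⟩
    exact Finset.single_le_sum
      (f := fun k => (Nat.choose k (x n) : ℝ) * (Nat.choose k (y n) : ℝ) / 2 ^ (k + 1))
      (fun i _ => by positivity) (Finset.mem_range.2 (hkn n hn))
  refine tendsto_of_tendsto_of_tendsto_of_le_of_le' (hlow.trans_eq ?_) (hup.trans_eq ?_) ?_ ?_
  · congr 1
    rw [Real.log_div ha.ne' hta.ne', Real.log_div hb.ne' htb.ne']
    linear_combination t * hlogQ - hcase'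
  · congr 1
    ring
  · filter_upwards [hpos, hxk, hyk] with n ⟨hn, hp, hle⟩ h1 h2
    have hn' : (0 : ℝ) < n := by exact_mod_cast hn
    have c1 : (0 : ℝ) < (k n).choose (x n) := by exact_mod_cast Nat.choose_pos h1.le
    have c2 : (0 : ℝ) < (k n).choose (y n) := by exact_mod_cast Nat.choose_pos h2.le
    have hl := Real.log_le_log hp hle
    rw [Real.log_div (by positivity) (by positivity), Real.log_mul c1.ne' c2.ne',
      Real.log_pow] at hl
    have := mul_le_mul_of_nonneg_left hl (by positivity : 0 ≤ 1 / (n : ℝ))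
    refine le_trans (le_of_eq ?_) this
    push_cast
    ring
  · filter_upwards [hpos] with n ⟨hn, hp, hle⟩
    have hn' : (0 : ℝ) < n := by exact_mod_cast hn
    have hS := hp.trans_le hle
    have hl := Real.log_le_log (by positivity)
      (delannoyPartialSum_mul_le hu hv hQ huv n (x n) (y n))
    rw [Real.log_mul hS.ne' (by positivity), Real.log_mul (by positivity) (by positivity),
      Real.log_pow, Real.log_pow, Real.log_mul hn'.ne' (by positivity), Real.log_pow] at hl
    rw [one_div, inv_mul_le_iff₀ hn']
    have e : (n : ℝ) * (Real.log n / n + Real.log Q - x n / n * Real.log (a / (t - a)) -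
        y n / n * Real.log (b / (t - b))) = Real.log n + n * Real.log Q -
        x n * Real.log (a / (t - a)) - y n * Real.log (b / (t - b)) := by
      field_simp
    rw [e]
    linarith

/-- Corollary 4.3 of the paper (the limiting "helmet" surface), in tiling-free form: if
`x(n)/n → a` and `y(n)/n → b` with `0 < a, b < 1` and `(1−a)(1−b) ≠ 1/2`, then
`(1/n) log S(n, x(n), y(n))` converges to
`b log(a/b + √(1 + a²/b²)) + a log(b/a + √(1 + b²/a²))` when `(1−a)(1−b) > 1/2`, and to
`−log(2 a^a b^b (1−a)^{1−a} (1−b)^{1−b})` when `(1−a)(1−b) < 1/2`. -/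
theorem delannoyPartialSum_log_asymptotics (a b : ℝ)
    (ha0 : 0 < a) (ha1 : a < 1) (hb0 : 0 < b) (hb1 : b < 1)
    (hab : (1 - a) * (1 - b) ≠ 1 / 2)
    (x y : ℕ → ℕ)
    (hx : Tendsto (fun n => (x n : ℝ) / n) atTop (nhds a))
    (hy : Tendsto (fun n => (y n : ℝ) / n) atTop (nhds b)) :
    ((1 - a) * (1 - b) > 1 / 2 →
      Tendsto (fun n : ℕ => (1 / (n : ℝ)) * Real.log (delannoyPartialSum n (x n) (y n)))
        atTop (nhds (b * Real.log (a / b + Real.sqrt (1 + a ^ 2 / b ^ 2)) +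
          a * Real.log (b / a + Real.sqrt (1 + b ^ 2 / a ^ 2))))) ∧
    ((1 - a) * (1 - b) < 1 / 2 →
      Tendsto (fun n : ℕ => (1 / (n : ℝ)) * Real.log (delannoyPartialSum n (x n) (y n)))
        atTop (nhds (-Real.log (2 * a ^ a * b ^ b * (1 - a) ^ (1 - a) * (1 - b) ^ (1 - b))))) := by
  refine ⟨fun h => ?_, fun h => ?_⟩
  · set r := √(a ^ 2 + b ^ 2) with hr
    have hr2 : r ^ 2 = a ^ 2 + b ^ 2 := Real.sq_sqrt (by positivity)
    have hr0 : 0 < r := by positivity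
    have hsum : a + b < 1 := by nlinarith [mul_pos ha0 hb0]
    have hr1 : r ≤ 1 - a - b := by
      refine Real.sqrt_le_iff.2 ⟨by linarith, by nlinarith⟩
    -- `t = a + b + r` is the larger root of `t² = 2(t-a)(t-b)`
    have key := tendsto_log_delannoyPartialSum (t := a + b + r) (Q := 1) ha0 hb0 (by linarith)
      (by linarith) (by linarith) le_rfl (by nlinarith) (Or.inr rfl) hx hy
    refine key.trans_eq ?_
    have e1 : √(1 + a ^ 2 / b ^ 2) = r / b := by
      rw [show 1 + a ^ 2 / b ^ 2 = (a ^ 2 + b ^ 2) / b ^ 2 by field_simp; ring,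
        Real.sqrt_div' _ (by positivity), Real.sqrt_sq hb0.le]
    have e2 : √(1 + b ^ 2 / a ^ 2) = r / a := by
      rw [show 1 + b ^ 2 / a ^ 2 = (a ^ 2 + b ^ 2) / a ^ 2 by field_simp,
        Real.sqrt_div' _ (by positivity), Real.sqrt_sq ha0.le]
    rw [e1, e2, ← add_div, ← add_div, Real.log_one, show a + b + r - a = b + r by ring,
      show a + b + r - b = a + r by ring, Real.log_div (by positivity) (by positivity),
      Real.log_div (by positivity) (by positivity), Real.log_div (by positivity) (by positivity),
      Real.log_div (by positivity) (by positivity)]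
    congr 1
    ring
  · have ha' : 0 < 1 - a := sub_pos.2 ha1
    have hb' : 0 < 1 - b := sub_pos.2 hb1
    have hp : 0 < 2 * ((1 - a) * (1 - b)) := by positivity
    have key := tendsto_log_delannoyPartialSum (t := 1) (Q := 1 / (2 * ((1 - a) * (1 - b))))
      ha0 hb0 ha1 hb1 le_rfl ((one_le_div hp).2 (by linarith)) (by field_simp)
      (Or.inl rfl) hx hy
    refine key.trans_eq ?_
    rw [Real.log_div one_ne_zero hp.ne', Real.log_one, Real.log_mul two_ne_zero (by positivity),
      Real.log_mul ha'.ne' hb'.ne', Real.log_div ha0.ne' ha'.ne', Real.log_div hb0.ne' hb'.ne',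
      Real.log_mul (by positivity) (by positivity), Real.log_mul (by positivity) (by positivity),
      Real.log_mul (by positivity) (by positivity), Real.log_mul (by positivity) (by positivity),
      Real.log_rpow ha0, Real.log_rpow hb0, Real.log_rpow ha', Real.log_rpow hb']
    congr 1
    ring
end

section
/- Let F be a field, let k ≥ 1, let a_1,…,a_k, b_1,…,b_k, x, y, z ∈ F, and suppose 1 + x·a_i + y·b_j + z·a_i·b_j ≠ 0 for all 1 ≤ i,j ≤ k. Then det( (1 + x·a_i + y·b_j + z·a_i·b_j)^{-1} )_{1≤i,j≤k} = (x·y − z)^{k(k−1)/2} · ∏_{1≤i<j≤k} (a_j − a_i)(b_j − b_i) / ∏_{i=1}^{k} ∏_{j=1}^{k} (1 + x·a_i + y·b_j + z·a_i·b_j). -/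
/-!
Write `D i j = 1 + x aᵢ + y bⱼ + z aᵢ bⱼ`. The determinant is computed by induction on `k`, taking the
Schur complement of the top left entry. Since `D i j` is a bilinear form in `(1, aᵢ)`, `(1, bⱼ)` whose
matrix has determinant `z - x y`, one has
`D i 0 * D 0 j - D 0 0 * D i j = (x y - z) (aᵢ - a₀) (bⱼ - b₀)`, so the Schur complement has entries
`(x y - z) (aᵢ - a₀) (bⱼ - b₀) / (D i 0 * D 0 j) * (D i j)⁻¹`: a row and column rescaling of the
matrix of the same shape and size `k - 1`. No division by `x y - z` or `z` occurs, so no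
degenerate cases arise.
-/

/-- Expansion of a determinant through the Schur complement of its `(0, 0)` entry. -/
theorem det_succ_eq_mul_det_schur {F : Type*} [Field F] {n : ℕ}
    (M : Matrix (Fin (n + 1)) (Fin (n + 1)) F) (h0 : M 0 0 ≠ 0) :
    M.det = M 0 0 * (Matrix.of fun i j : Fin n =>
      M i.succ j.succ - M i.succ 0 / M 0 0 * M 0 j.succ).det := by
  let c : Fin (n + 1) → F := Fin.cons 0 fun i => M i.succ 0 / M 0 0
  have hdet : M.det = (Matrix.of fun i j => M i j - c i * M 0 j).det := by
    refine Matrix.det_eq_of_forall_row_eq_smul_add_const c 0 rfl fun i j => ?_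
    simp [c]
  rw [hdet, Matrix.det_succ_column_zero, Fin.sum_univ_succ, Finset.sum_eq_zero]
  · simp only [add_zero, Fin.val_zero, pow_zero, one_mul]
    congr 1
    · simp [c]
  · intro i _
    simp [c, h0]

/-- The Cauchy-like determinant identity (equation (5.13) of the paper): over any field `F`,
provided all denominators `1 + x aᵢ + y bⱼ + z aᵢ bⱼ` are nonzero,
`det((1 + x aᵢ + y bⱼ + z aᵢ bⱼ)⁻¹) = (xy − z)^{k(k−1)/2} ∏_{i<j} (aⱼ−aᵢ)(bⱼ−bᵢ) /
  ∏_{i,j} (1 + x aᵢ + y bⱼ + z aᵢ bⱼ)`. -/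
theorem cauchy_like_determinant (F : Type*) [Field F] (k : ℕ) (hk : 1 ≤ k)
    (a b : Fin k → F) (x y z : F)
    (h : ∀ i j, 1 + x * a i + y * b j + z * (a i * b j) ≠ 0) :
    (Matrix.of fun i j : Fin k => (1 + x * a i + y * b j + z * (a i * b j))⁻¹).det =
      (x * y - z) ^ (k * (k - 1) / 2) *
        (∏ i : Fin k, ∏ j ∈ Finset.Ioi i, (a j - a i) * (b j - b i)) /
        ∏ i : Fin k, ∏ j : Fin k, (1 + x * a i + y * b j + z * (a i * b j)) := by
  clear hk
  induction k with
  | zero => simp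
  | succ n ih =>
    rw [det_succ_eq_mul_det_schur _ (by simpa using h 0 0)]
    have hschur : (Matrix.of fun i j : Fin n =>
        (Matrix.of fun i j => (1 + x * a i + y * b j + z * (a i * b j))⁻¹) i.succ j.succ -
        (Matrix.of fun i j => (1 + x * a i + y * b j + z * (a i * b j))⁻¹) i.succ 0 /
        (Matrix.of fun i j => (1 + x * a i + y * b j + z * (a i * b j))⁻¹) 0 0 *
        (Matrix.of fun i j => (1 + x * a i + y * b j + z * (a i * b j))⁻¹) 0 j.succ) =
      Matrix.of fun i j : Fin n =>
        ((x * y - z) * (a i.succ - a 0) / (1 + x * a i.succ + y * b 0 + z * (a i.succ * b 0))) *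
        (Matrix.of fun i j : Fin n =>
          ((b j.succ - b 0) / (1 + x * a 0 + y * b j.succ + z * (a 0 * b j.succ))) *
          (Matrix.of fun i j : Fin n => (1 + x * a i.succ + y * b j.succ +
            z * (a i.succ * b j.succ))⁻¹) i j) i j := by
      ext i j
      have h1 := h i.succ j.succ
      have h2 := h i.succ 0
      have h3 := h 0 j.succ
      have h4 := h 0 0
      simp only [Matrix.of_apply]
      rw [div_inv_eq_mul]
      generalize hA : 1 + x * a i.succ + y * b j.succ + z * (a i.succ * b j.succ) = A at *
      generalize hB : 1 + x * a i.succ + y * b 0 + z * (a i.succ * b 0) = B at *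
      generalize hC : 1 + x * a 0 + y * b j.succ + z * (a 0 * b j.succ) = C at *
      field_simp
      subst hA hB hC
      ring
    rw [hschur, Matrix.det_mul_column, Matrix.det_mul_row,
      ih (fun i => a i.succ) (fun j => b j.succ) fun i j => h i.succ j.succ]
    rw [Nat.triangle_succ]
    simp only [Fin.prod_univ_succ, Fin.prod_Ioi_zero, Fin.prod_Ioi_succ, Matrix.of_apply,
      Finset.prod_mul_distrib, Finset.prod_inv_distrib, Finset.prod_const, Finset.card_univ,
      Fintype.card_fin, pow_add, div_eq_mul_inv, mul_inv]
    ring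
end

section
/- Let A, B, C > 0 and α, β ∈ (0,1) be real numbers with (1−α)(1−β)·A·B > (α·A + β·B)·C. Let a, b, c, i, j : ℕ → ℕ be sequences with a(n)/n → A, b(n)/n → B, c(n)/n → C, i(n)/n → α·A, j(n)/n → β·B, and 1 ≤ i(n) ≤ a(n), 1 ≤ j(n) ≤ b(n) for all n. Define T(n) := ∑_{k=0}^{a(n)−i(n)} ( (c(n))_k · (j(n)−b(n))_k · (i(n)−a(n))_k ) / ( (c(n)+1)_k · (1−a(n)−b(n))_k · k! ), where all Pochhammer symbols are taken in ℝ (with integer arguments cast to ℝ). Then T(n) > 0 for all sufficiently large n, and (1/n)·log T(n) converges, as n → ∞, to log of d := ((1−α)A)^{(1−α)A} · ((1−β)B)^{(1−β)B} · (A+B+C)^{A+B+C} · C^C / ( (A+B)^{A+B} · ((1−α)A + C)^{(1−α)A + C} · ((1−β)B + C)^{(1−β)B + C} ). -/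
/-!
Put `p = a - i`, `q = b - j`, `M = i + j - 1` and `N = p + q + M = a + b - 1`. The series alternates
in sign, but it has a form with non-negative terms (`hexSeries_eq_sum_choose`), namely
`T = (∑_{l = 0}^{p} C(p + M, p - l) C(q + c, c + l)) / (C(N, p) C(q + c, q))`.
This sum is the part of Vandermonde's sum for `C(N + c, p + c)` with index `c + l ≥ c`. In the
regime considered, `p q > M c` for large `n`, and then the Vandermonde summands increase up to the
index `c`; so the `c` missing summands are each at most the first one kept, and
`U / (c + 1) ≤ T ≤ U` with `U = p! q! (N + c)! c! / (N! (p + c)! (q + c)!)` (`hexSeries_bounds`).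
The factor `c + 1` is negligible on the exponential scale, and Stirling's formula applied to `U`
gives the limit.
-/

open Filter Real Polynomial

/-- The terminating hypergeometric series
`₃F₂[c, −b+j, −a+i; c+1, 1−a−b; 1] = ∑_{k=0}^{a−i} (c)_k (j−b)_k (i−a)_k /
  ((c+1)_k (1−a−b)_k k!)`, with all Pochhammer symbols taken in `ℝ`. -/
noncomputable def hexSeries (a b c i j : ℕ) : ℝ :=
  ∑ k ∈ Finset.range (a - i + 1),
    ((ascPochhammer ℝ k).eval (c : ℝ) * (ascPochhammer ℝ k).eval ((j : ℝ) - (b : ℝ)) *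
        (ascPochhammer ℝ k).eval ((i : ℝ) - (a : ℝ))) /
      ((ascPochhammer ℝ k).eval ((c : ℝ) + 1) *
        (ascPochhammer ℝ k).eval (1 - (a : ℝ) - (b : ℝ)) * (Nat.factorial k : ℝ))

/-! ### A form of the series with non-negative terms -/

/-- The beta integral `∫₀¹ x ^ c (1 - x) ^ l dx`, expanded binomially; here by induction on `l`. -/
lemma alternating_sum_choose_div (l : ℕ) : ∀ c : ℕ,
    ∑ k ∈ Finset.range (l + 1), (-1 : ℝ) ^ k * (l.choose k : ℝ) / ((c : ℝ) + 1 + k) =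
      (l.factorial : ℝ) * c.factorial / (c + 1 + l).factorial := by
  induction l with
  | zero =>
    intro c
    have h1 : (c.factorial : ℝ) ≠ 0 := by positivity
    simp [Nat.factorial_succ]
    field_simp
  | succ l ih =>
    intro c
    have hpascal : ∑ k ∈ Finset.range (l + 1 + 1),
        (-1 : ℝ) ^ k * ((l + 1).choose k : ℝ) / ((c : ℝ) + 1 + k) =
        ∑ k ∈ Finset.range (l + 1), (-1 : ℝ) ^ k * (l.choose k : ℝ) / ((c : ℝ) + 1 + k) -
        ∑ k ∈ Finset.range (l + 1),
          (-1 : ℝ) ^ k * (l.choose k : ℝ) / (((c + 1 : ℕ) : ℝ) + 1 + k) := by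
      have h2 : ∑ k ∈ Finset.range (l + 1), (-1 : ℝ) ^ k * (l.choose k : ℝ) / ((c : ℝ) + 1 + k) =
          ∑ k ∈ Finset.range (l + 1 + 1),
            (-1 : ℝ) ^ k * (l.choose k : ℝ) / ((c : ℝ) + 1 + k) := by
        rw [Finset.sum_range_succ _ (l + 1)]
        simp
      rw [h2, Finset.sum_range_succ', Finset.sum_range_succ' _ (l + 1), add_sub_right_comm,
        ← Finset.sum_sub_distrib]
      congr 1
      · refine Finset.sum_congr rfl fun k _ => ?_
        rw [Nat.choose_succ_succ]
        push_cast
        have : (c : ℝ) + 1 + 1 + k = c + 1 + (k + 1) := by ring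
        rw [this]
        ring
      · simp
    rw [hpascal, ih c, ih (c + 1)]
    have e1 : (c + 1 + (l + 1)).factorial = (c + l + 2) * (c + 1 + l).factorial := by
      rw [show c + 1 + (l + 1) = (c + 1 + l) + 1 by ring, Nat.factorial_succ]; ring
    have e2 : (c + 1 + 1 + l).factorial = (c + l + 2) * (c + 1 + l).factorial := by
      rw [show c + 1 + 1 + l = (c + 1 + l) + 1 by ring, Nat.factorial_succ]; ring
    rw [e1, e2, Nat.factorial_succ c, Nat.factorial_succ l]
    have h1 : ((c + 1 + l).factorial : ℝ) ≠ 0 := by positivity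
    push_cast
    field_simp
    ring

lemma ascPochhammer_eval_neg_natCast (m k : ℕ) :
    (ascPochhammer ℝ k).eval (-(m : ℝ)) = (-1) ^ k * (m.descFactorial k : ℝ) := by
  rw [ascPochhammer_eval_neg_eq_descPochhammer, descPochhammer_eval_eq_descFactorial]

lemma ascPochhammer_eval_div_succ (c k : ℕ) :
    (ascPochhammer ℝ k).eval ((c : ℝ) + 1) / (ascPochhammer ℝ k).eval ((c : ℝ) + 1 + 1) =
      ((c : ℝ) + 1) / ((c : ℝ) + 1 + k) := by
  have hpos : 0 < (ascPochhammer ℝ k).eval ((c : ℝ) + 1 + 1) :=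
    ascPochhammer_pos _ _ (by positivity)
  rw [div_eq_div_iff hpos.ne' (by positivity)]
  have h1 := ascPochhammer_succ_eval (S := ℝ) k ((c : ℝ) + 1)
  have h2 : (ascPochhammer ℝ (k + 1)).eval ((c : ℝ) + 1) =
      ((c : ℝ) + 1) * (ascPochhammer ℝ k).eval ((c : ℝ) + 1 + 1) := by
    rw [ascPochhammer_succ_left]
    simp [Polynomial.eval_comp]
  rw [← h1, h2]

lemma descFactorial_ratio (p N k : ℕ) (hk : k ≤ p) (hpN : p ≤ N) :
    (p.descFactorial k : ℝ) / N.descFactorial k = ((N - k).choose (p - k) : ℝ) / N.choose p := by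
  have h1 : (N.descFactorial k : ℝ) ≠ 0 := by
    exact_mod_cast (Nat.descFactorial_pos.2 (hk.trans hpN)).ne'
  have h2 : (N.choose p : ℝ) ≠ 0 := by exact_mod_cast (Nat.choose_pos hpN).ne'
  rw [div_eq_div_iff h1 h2]
  have := Nat.choose_mul (n := N) hk
  rw [Nat.descFactorial_eq_factorial_mul_choose, Nat.descFactorial_eq_factorial_mul_choose]
  have h3 : (N.choose p : ℝ) * p.choose k = N.choose k * (N - k).choose (p - k) := by
    exact_mod_cast this
  push_cast
  linear_combination (k.factorial : ℝ) * h3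

/-- Vandermonde's identity, with the factor `q.choose k` redistributed by trinomial revision. -/
lemma choose_mul_choose_eq_sum (p q M k : ℕ) (hk : k ≤ p) :
    q.choose k * (p + q + M - k).choose (p - k) =
      ∑ l ∈ Finset.range (p + 1), (p + M).choose (p - l) * q.choose l * l.choose k := by
  rcases lt_or_ge q k with hqk | hqk
  · rw [Nat.choose_eq_zero_of_lt hqk, zero_mul]
    symm
    refine Finset.sum_eq_zero fun l _ => ?_
    rcases lt_or_ge l k with h | h
    · rw [Nat.choose_eq_zero_of_lt h, mul_zero]
    · rw [Nat.choose_eq_zero_of_lt (hqk.trans_le h), mul_zero, zero_mul]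
  · have e1 : p + q + M - k = (q - k) + (p + M) := by omega
    rw [e1, Nat.add_choose_eq, Finset.Nat.sum_antidiagonal_eq_sum_range_succ_mk, Finset.mul_sum]
    have e2 : p + 1 = k + (p - k + 1) := by omega
    have hzero : ∑ l ∈ Finset.range k, (p + M).choose (p - l) * q.choose l * l.choose k = 0 := by
      refine Finset.sum_eq_zero fun l hl => ?_
      rw [Nat.choose_eq_zero_of_lt (Finset.mem_range.1 hl), mul_zero]
    rw [e2, Finset.sum_range_add, hzero, zero_add]
    refine Finset.sum_congr rfl fun m _ => ?_
    have h3 : q.choose (k + m) * (k + m).choose k = q.choose k * (q - k).choose m := by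
      simpa using Nat.choose_mul (n := q) (Nat.le_add_right k m)
    simp only
    rw [mul_assoc, h3, Nat.sub_add_eq]
    ring

/-- The alternating series as a sum of non-negative terms, where `p = a - i`, `q = b - j` and
`M = i + j - 1`: expand each summand by `choose_mul_choose_eq_sum`, exchange the two sums, and
evaluate the inner alternating sum by `alternating_sum_choose_div`. -/
lemma hexSeries_eq_sum_choose (p q M c a b i j : ℕ) (ha : a = p + i) (hb : b = q + j)
    (hM : i + j = M + 1) :
    hexSeries a b (c + 1) i j * ((p + q + M).choose p * (q + (c + 1)).choose q) =
      ∑ l ∈ Finset.range (p + 1),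
        ((p + M).choose (p - l) : ℝ) * (q + (c + 1)).choose (c + 1 + l) := by
  have hN0 : ((p + q + M).choose p : ℝ) ≠ 0 := by
    exact_mod_cast (Nat.choose_pos (by omega)).ne'
  have hterm : hexSeries a b (c + 1) i j = ∑ k ∈ Finset.range (p + 1),
      (-1 : ℝ) ^ k * (((c : ℝ) + 1) / ((c : ℝ) + 1 + k)) *
        (∑ l ∈ Finset.range (p + 1), (p + M).choose (p - l) * q.choose l * l.choose k : ℕ) /
          (p + q + M).choose p := by
    unfold hexSeries
    have hai : a - i = p := by omega
    rw [hai]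
    refine Finset.sum_congr rfl fun k hk => ?_
    have hkp : k ≤ p := Nat.lt_succ_iff.1 (Finset.mem_range.1 hk)
    rw [← choose_mul_choose_eq_sum p q M k hkp]
    have e1 : (j : ℝ) - b = -(q : ℝ) := by rw [hb]; push_cast; ring
    have e2 : (i : ℝ) - a = -(p : ℝ) := by rw [ha]; push_cast; ring
    have e3 : 1 - (a : ℝ) - b = -((p + q + M : ℕ) : ℝ) := by
      have : (i : ℝ) + j = M + 1 := by exact_mod_cast hM
      rw [ha, hb]; push_cast; linarith
    rw [e1, e2, e3]
    simp only [ascPochhammer_eval_neg_natCast]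
    have h1 := ascPochhammer_eval_div_succ c k
    have h2 := descFactorial_ratio p (p + q + M) k hkp (by omega)
    have h3 : (q.descFactorial k : ℝ) = k.factorial * q.choose k := by
      exact_mod_cast Nat.descFactorial_eq_factorial_mul_choose q k
    have hk0 : (k.factorial : ℝ) ≠ 0 := by positivity
    have hs : ((-1 : ℝ) ^ k) ≠ 0 := by simp
    rw [h3]
    push_cast
    calc _ = ((-1 : ℝ) ^ k) * ((ascPochhammer ℝ k).eval ((c : ℝ) + 1) /
            (ascPochhammer ℝ k).eval ((c : ℝ) + 1 + 1)) * q.choose k *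
            ((p.descFactorial k : ℝ) / (p + q + M).descFactorial k) *
              ((k.factorial : ℝ) / k.factorial) * (((-1 : ℝ) ^ k) / (-1) ^ k) := by
          ring
      _ = _ := by
          rw [h1, h2, div_self hk0, div_self hs]
          ring
  have hinner : ∀ l ∈ Finset.range (p + 1),
      (∑ k ∈ Finset.range (p + 1),
        (-1 : ℝ) ^ k * (((c : ℝ) + 1) / ((c : ℝ) + 1 + k)) * l.choose k) =
        (l.factorial : ℝ) * (c + 1).factorial / (c + 1 + l).factorial := by
    intro l hl
    have hlp : l + 1 ≤ p + 1 := Nat.succ_le_of_lt (Finset.mem_range.1 hl)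
    have hsub : Finset.range (l + 1) ⊆ Finset.range (p + 1) := Finset.range_subset_range.2 hlp
    rw [← Finset.sum_subset hsub]
    · have h := alternating_sum_choose_div l c
      calc _ = ((c : ℝ) + 1) * ∑ k ∈ Finset.range (l + 1),
            (-1 : ℝ) ^ k * (l.choose k : ℝ) / ((c : ℝ) + 1 + k) := by
            rw [Finset.mul_sum]
            exact Finset.sum_congr rfl fun k _ => by ring
        _ = _ := by
            rw [h, Nat.factorial_succ c]; push_cast; ring
    · intro k _ hk
      rw [Nat.choose_eq_zero_of_lt (by simpa using hk)]
      simp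
  have hq : ∀ l, (q.choose l : ℝ) * ((l.factorial : ℝ) * (c + 1).factorial /
      (c + 1 + l).factorial) * (q + (c + 1)).choose q = (q + (c + 1)).choose (c + 1 + l) := by
    intro l
    rcases le_or_gt l q with h | h
    · rw [Nat.cast_choose ℝ h, Nat.cast_choose ℝ (by omega : q ≤ q + (c + 1)),
        Nat.cast_choose ℝ (by omega : c + 1 + l ≤ q + (c + 1))]
      rw [show q + (c + 1) - (c + 1 + l) = q - l by omega,
        show q + (c + 1) - q = c + 1 by omega]
      have h1 : (q.factorial : ℝ) ≠ 0 := by positivity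
      have h2 : (l.factorial : ℝ) ≠ 0 := by positivity
      have h3 : ((c + 1).factorial : ℝ) ≠ 0 := by positivity
      field_simp
    · rw [Nat.choose_eq_zero_of_lt h,
        Nat.choose_eq_zero_of_lt (by omega : q + (c + 1) < c + 1 + l)]
      simp
  rw [hterm]
  push_cast
  rw [← Finset.sum_div, ← mul_assoc, div_mul_cancel₀ _ hN0]
  simp only [Finset.mul_sum]
  rw [Finset.sum_comm, Finset.sum_mul]
  refine Finset.sum_congr rfl fun l hl => ?_
  rw [← hq l, ← hinner l hl, Finset.mul_sum, Finset.sum_mul, Finset.sum_mul, Finset.mul_sum]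
  exact Finset.sum_congr rfl fun k _ => by ring

/-! ### Comparison with the full Vandermonde sum -/

/-- The summands of Vandermonde's identity for `(p + q + M + c).choose (p + c)` increase up to the
index `c`. -/
lemma vandermonde_term_mono (p q M c f : ℕ) (hpq : M * c ≤ p * q) (hf : f < c) :
    (q + c).choose f * (p + M).choose (p + c - f) ≤
      (q + c).choose (f + 1) * (p + M).choose (p + c - (f + 1)) := by
  rcases lt_or_ge (p + M) (p + c - f) with h | h
  · rw [Nat.choose_eq_zero_of_lt h]; simp
  · obtain ⟨g, rfl⟩ : ∃ g, c = f + 1 + g := ⟨c - (f + 1), by omega⟩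
    obtain ⟨m, rfl⟩ : ∃ m, M = g + 1 + m := ⟨M - (g + 1), by omega⟩
    rw [show p + (f + 1 + g) - f = (p + g) + 1 by omega,
      show p + (f + 1 + g) - (f + 1) = p + g by omega]
    have h1 := Nat.choose_succ_right_eq (q + (f + 1 + g)) f
    have h2 := Nat.choose_succ_right_eq (p + (g + 1 + m)) (p + g)
    rw [show q + (f + 1 + g) - f = q + g + 1 by omega] at h1
    rw [show p + (g + 1 + m) - (p + g) = m + 1 by omega] at h2
    -- `(f + 1) (m + 1) ≤ c M ≤ p q`, and the ratio of the two sides is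
    -- `(q + g + 1) (p + g + 1) / ((f + 1) (m + 1))`.
    set X := (q + (f + 1 + g)).choose f
    set Y := (p + (g + 1 + m)).choose (p + g)
    set X₁ := (q + (f + 1 + g)).choose (f + 1)
    set Y₁ := (p + (g + 1 + m)).choose (p + g + 1)
    have key : (f + 1) * (m + 1) ≤ (q + g + 1) * (p + g + 1) := by nlinarith
    have hpos : 0 < (f + 1) * (p + g + 1) := by positivity
    refine le_of_mul_le_mul_right ?_ hpos
    calc X * Y₁ * ((f + 1) * (p + g + 1)) = X * (f + 1) * (Y₁ * (p + g + 1)) := by ring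
      _ = X * Y * ((f + 1) * (m + 1)) := by rw [h2]; ring
      _ ≤ X * Y * ((q + g + 1) * (p + g + 1)) := Nat.mul_le_mul_left _ key
      _ = (X * (q + g + 1)) * Y * (p + g + 1) := by ring
      _ = X₁ * Y * ((f + 1) * (p + g + 1)) := by rw [← h1]; ring

/-- The part of the Vandermonde sum with index at least `c` carries at least a fraction
`1 / (c + 1)` of the whole: each of the `c` other summands is at most the one of index `c`. -/
lemma partial_vandermonde_bounds (p q M c : ℕ) (hpq : M * c ≤ p * q) :
    (∑ l ∈ Finset.range (p + 1), (p + M).choose (p - l) * (q + c).choose (c + l)) ≤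
      (p + q + M + c).choose (p + c) ∧
    (p + q + M + c).choose (p + c) ≤ (c + 1) *
      ∑ l ∈ Finset.range (p + 1), (p + M).choose (p - l) * (q + c).choose (c + l) := by
  set V : ℕ → ℕ := fun f => (q + c).choose f * (p + M).choose (p + c - f) with hV
  set S := ∑ l ∈ Finset.range (p + 1), (p + M).choose (p - l) * (q + c).choose (c + l) with hS
  have hS' : S = ∑ l ∈ Finset.range (p + 1), V (c + l) := by
    refine Finset.sum_congr rfl fun l _ => ?_
    simp only [hV]
    rw [show p + c - (c + l) = p - l by omega, mul_comm]
  have htot : (p + q + M + c).choose (p + c) = ∑ f ∈ Finset.range c, V f + S := by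
    rw [hS', ← Finset.sum_range_add, show p + q + M + c = (q + c) + (p + M) by ring,
      Nat.add_choose_eq, Finset.Nat.sum_antidiagonal_eq_sum_range_succ_mk,
      show c + (p + 1) = (p + c).succ by simp; ring]
  have hle : ∀ d, d ≤ c → V (c - d) ≤ V c := by
    intro d
    induction d with
    | zero => intro _; simp
    | succ d ih =>
      intro hd
      have h := vandermonde_term_mono p q M c (c - (d + 1)) hpq (by omega)
      have e : c - (d + 1) + 1 = c - d := by omega
      rw [e] at h
      exact h.trans (ih (by omega))
  have hfirst : ∑ f ∈ Finset.range c, V f ≤ c * V c := by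
    calc _ ≤ ∑ _f ∈ Finset.range c, V c := by
          refine Finset.sum_le_sum fun f hf => ?_
          have := hle (c - f) (by omega)
          rwa [Nat.sub_sub_self (Finset.mem_range.1 hf).le] at this
      _ = c * V c := by simp
  have hVS : V c ≤ S := by
    rw [hS']
    exact Finset.single_le_sum (f := fun l => V (c + l)) (fun _ _ => Nat.zero_le _)
      (Finset.mem_range.2 (Nat.succ_pos p))
  rw [htot]
  refine ⟨by omega, ?_⟩
  have := Nat.mul_le_mul_left c hVS
  linarith [add_mul c 1 S]

/-- The quotient `(N + c).choose (p + c) / (N.choose p * (q + c).choose q)` (for `p + q ≤ N`)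
written with factorials; `hexSeries` equals it up to a factor between `1 / (c + 1)` and `1`. -/
noncomputable def vandermondeProduct (p q N c : ℕ) : ℝ :=
  (p.factorial * q.factorial * (N + c).factorial * c.factorial : ℝ) /
    (N.factorial * (p + c).factorial * (q + c).factorial)

lemma hexSeries_bounds (a b c i j : ℕ) (hc : 1 ≤ c) (hi : 1 ≤ i) (hia : i ≤ a)
    (hjb : j ≤ b) (hpq : (i + j - 1) * c ≤ (a - i) * (b - j)) :
    vandermondeProduct (a - i) (b - j) (a + b - 1) c / ((c : ℝ) + 1) ≤ hexSeries a b c i j ∧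
      hexSeries a b c i j ≤ vandermondeProduct (a - i) (b - j) (a + b - 1) c := by
  obtain ⟨p, rfl⟩ : ∃ p, a = p + i := ⟨a - i, by omega⟩
  obtain ⟨q, rfl⟩ : ∃ q, b = q + j := ⟨b - j, by omega⟩
  obtain ⟨M, hM⟩ : ∃ M, i + j = M + 1 := ⟨i + j - 1, by omega⟩
  obtain ⟨c, rfl⟩ : ∃ d, c = d + 1 := ⟨c - 1, by omega⟩
  rw [show p + i + (q + j) - 1 = p + q + M by omega, show p + i - i = p by omega,
    show q + j - j = q by omega]
  rw [show i + j - 1 = M by omega, show p + i - i = p by omega,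
    show q + j - j = q by omega] at hpq
  have hid := hexSeries_eq_sum_choose p q M c _ _ i j rfl rfl hM
  obtain ⟨hu, hl⟩ := partial_vandermonde_bounds p q M (c + 1) hpq
  have hu' : (∑ l ∈ Finset.range (p + 1),
        ((p + M).choose (p - l) : ℝ) * (q + (c + 1)).choose (c + 1 + l)) ≤
      (p + q + M + (c + 1)).choose (p + (c + 1)) := by exact_mod_cast hu
  have hl' : ((p + q + M + (c + 1)).choose (p + (c + 1)) : ℝ) ≤ (((c + 1 : ℕ) : ℝ) + 1) *
      ∑ l ∈ Finset.range (p + 1),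
        ((p + M).choose (p - l) : ℝ) * (q + (c + 1)).choose (c + 1 + l) := by exact_mod_cast hl
  rw [← hid] at hu' hl'
  have hD : (0 : ℝ) < (p + q + M).choose p * (q + (c + 1)).choose q := by
    have h1 : 0 < (p + q + M).choose p := Nat.choose_pos (by omega)
    have h2 : 0 < (q + (c + 1)).choose q := Nat.choose_pos (by omega)
    positivity
  have hU : vandermondeProduct p q (p + q + M) (c + 1) =
      ((p + q + M + (c + 1)).choose (p + (c + 1)) : ℝ) /
        ((p + q + M).choose p * (q + (c + 1)).choose q) := by
    unfold vandermondeProduct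
    rw [Nat.cast_choose ℝ (by omega : p + (c + 1) ≤ p + q + M + (c + 1)),
      Nat.cast_choose ℝ (by omega : p ≤ p + q + M), Nat.cast_choose ℝ (by omega : q ≤ q + (c + 1)),
      show p + q + M + (c + 1) - (p + (c + 1)) = q + M by omega,
      show p + q + M - p = q + M by omega, show q + (c + 1) - q = c + 1 by omega]
    have h1 : ((q + M).factorial : ℝ) ≠ 0 := by positivity
    field_simp
  rw [hU]
  constructor
  · rw [div_div, div_le_iff₀ (by positivity)]
    linarith
  · rwa [le_div_iff₀ hD]

/-! ### Logarithmic asymptotics -/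

/-- Stirling's formula to exponential order: if `m n ~ μ n`, then
`log (m n)! = m n * log n + (μ log μ - μ) n + o(n)`. -/
lemma tendsto_log_factorial_scaled (m : ℕ → ℕ) (μ : ℝ) (hμ : 0 < μ)
    (hm : Tendsto (fun n => (m n : ℝ) / n) atTop (nhds μ)) :
    Tendsto (fun n : ℕ => Real.log ((m n).factorial) / n - (m n : ℝ) / n * Real.log n) atTop
      (nhds (μ * Real.log μ - μ)) := by
  have hn : Tendsto (fun n : ℕ => (n : ℝ)) atTop atTop := tendsto_natCast_atTop_atTop
  have hmtop : Tendsto m atTop atTop := by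
    rw [← tendsto_natCast_atTop_iff (R := ℝ)]
    have h := hm.pos_mul_atTop hμ hn
    refine h.congr' ?_
    filter_upwards [eventually_gt_atTop 0] with n hn0
    have : (n : ℝ) ≠ 0 := by positivity
    field_simp
  have hinv : Tendsto (fun n : ℕ => (n : ℝ)⁻¹) atTop (nhds 0) := tendsto_inv_atTop_zero.comp hn
  have hlogn : Tendsto (fun n : ℕ => Real.log n / n) atTop (nhds 0) := by
    have := Real.isLittleO_log_id_atTop.tendsto_div_nhds_zero.comp hn
    simpa [Function.comp_def] using this
  have hst : Tendsto (fun n => Real.log (Stirling.stirlingSeq (m n))) atTop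
      (nhds (Real.log (√π))) :=
    ((Real.continuousAt_log (by positivity)).tendsto.comp
      Stirling.tendsto_stirlingSeq_sqrt_pi).comp hmtop
  have hlogm : Tendsto (fun n => Real.log ((m n : ℝ) / n)) atTop (nhds (Real.log μ)) :=
    (Real.continuousAt_log hμ.ne').tendsto.comp hm
  have hlim : Tendsto (fun n : ℕ => Real.log (Stirling.stirlingSeq (m n)) * (n : ℝ)⁻¹ +
      1 / 2 * (Real.log 2 * (n : ℝ)⁻¹ + Real.log ((m n : ℝ) / n) * (n : ℝ)⁻¹ + Real.log n / n) +
      ((m n : ℝ) / n * Real.log ((m n : ℝ) / n) - (m n : ℝ) / n)) atTop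
      (nhds (Real.log (√π) * 0 + 1 / 2 * (Real.log 2 * 0 + Real.log μ * 0 + 0) +
        (μ * Real.log μ - μ))) :=
    ((hst.mul hinv).add ((((hinv.const_mul _).add (hlogm.mul hinv)).add hlogn).const_mul _)).add
      ((hm.mul hlogm).sub hm)
  have hval : Real.log (√π) * 0 + 1 / 2 * (Real.log 2 * 0 + Real.log μ * 0 + 0) +
        (μ * Real.log μ - μ) = μ * Real.log μ - μ := by ring
  rw [hval] at hlim
  refine hlim.congr' ?_
  filter_upwards [eventually_gt_atTop 0, hmtop.eventually_gt_atTop 0] with n hn0 hm0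
  have hnR : (0 : ℝ) < n := by exact_mod_cast hn0
  have hmR : (0 : ℝ) < m n := by exact_mod_cast hm0
  have hf := Stirling.log_stirlingSeq_formula (m n)
  rw [Real.log_mul (by norm_num) hmR.ne', Real.log_div hmR.ne' (Real.exp_ne_zero 1),
    Real.log_exp] at hf
  rw [hf, Real.log_div hmR.ne' hnR.ne']
  field_simp
  ring

/-- The `log n` and linear terms of Stirling's formula cancel, since the arguments of the
factorials in the numerator and in the denominator have the same sum. -/
lemma tendsto_log_vandermondeProduct (p q N c : ℕ → ℕ) (P Q S C : ℝ)
    (hP : 0 < P) (hQ : 0 < Q) (hS : 0 < S) (hC : 0 < C)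
    (hp : Tendsto (fun n => (p n : ℝ) / n) atTop (nhds P))
    (hq : Tendsto (fun n => (q n : ℝ) / n) atTop (nhds Q))
    (hN : Tendsto (fun n => (N n : ℝ) / n) atTop (nhds S))
    (hc : Tendsto (fun n => (c n : ℝ) / n) atTop (nhds C)) :
    Tendsto (fun n : ℕ => Real.log (vandermondeProduct (p n) (q n) (N n) (c n)) / n) atTop
      (nhds (Real.log (P ^ P * Q ^ Q * (S + C) ^ (S + C) * C ^ C /
        (S ^ S * (P + C) ^ (P + C) * (Q + C) ^ (Q + C))))) := by
  have hadd : ∀ (u : ℕ → ℕ) (U : ℝ), Tendsto (fun n => (u n : ℝ) / n) atTop (nhds U) →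
      Tendsto (fun n => ((u n + c n : ℕ) : ℝ) / n) atTop (nhds (U + C)) := by
    intro u U hu
    refine (hu.add hc).congr fun n => ?_
    push_cast
    ring
  have h1 := tendsto_log_factorial_scaled p P hP hp
  have h2 := tendsto_log_factorial_scaled q Q hQ hq
  have h3 := tendsto_log_factorial_scaled _ (S + C) (by positivity) (hadd N S hN)
  have h4 := tendsto_log_factorial_scaled c C hC hc
  have h5 := tendsto_log_factorial_scaled N S hS hN
  have h6 := tendsto_log_factorial_scaled _ (P + C) (by positivity) (hadd p P hp)
  have h7 := tendsto_log_factorial_scaled _ (Q + C) (by positivity) (hadd q Q hq)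
  have h := (((h1.add h2).add h3).add h4).sub ((h5.add h6).add h7)
  have hSC : 0 < S + C := by positivity
  have hPC : 0 < P + C := by positivity
  have hQC : 0 < Q + C := by positivity
  have hval : Real.log (P ^ P * Q ^ Q * (S + C) ^ (S + C) * C ^ C /
        (S ^ S * (P + C) ^ (P + C) * (Q + C) ^ (Q + C))) =
      (P * Real.log P - P + (Q * Real.log Q - Q) + ((S + C) * Real.log (S + C) - (S + C)) +
        (C * Real.log C - C)) - ((S * Real.log S - S) + ((P + C) * Real.log (P + C) - (P + C)) +
        ((Q + C) * Real.log (Q + C) - (Q + C))) := by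
    rw [Real.log_div (by positivity) (by positivity), Real.log_mul (by positivity) (by positivity),
      Real.log_mul (by positivity) (by positivity), Real.log_mul (by positivity) (by positivity),
      Real.log_mul (by positivity) (by positivity), Real.log_mul (by positivity) (by positivity),
      Real.log_rpow hP, Real.log_rpow hQ, Real.log_rpow hSC, Real.log_rpow hC, Real.log_rpow hS,
      Real.log_rpow hPC, Real.log_rpow hQC]
    ring
  rw [hval]
  refine h.congr fun n => ?_
  unfold vandermondeProduct
  rw [Real.log_div (by positivity) (by positivity), Real.log_mul (by positivity) (by positivity),
      Real.log_mul (by positivity) (by positivity), Real.log_mul (by positivity) (by positivity),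
      Real.log_mul (by positivity) (by positivity), Real.log_mul (by positivity) (by positivity)]
  push_cast
  ring

/-- The exponential-order content of Lemma 5.4(a): when
`(1−α)(1−β)AB > (αA + βB)C` (the segment joining the two dents lies outside the inscribed
ellipse), `T(n) > 0` eventually and `(1/n) log T(n)` converges to `log d`, where
`d = ((1−α)A)^{(1−α)A} ((1−β)B)^{(1−β)B} (A+B+C)^{A+B+C} C^C /
  ((A+B)^{A+B} ((1−α)A + C)^{(1−α)A + C} ((1−β)B + C)^{(1−β)B + C})`. -/
theorem hexSeries_log_asymptotics_outside (A B C α β : ℝ)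
    (hA : 0 < A) (hB : 0 < B) (hC : 0 < C)
    (hα : 0 < α ∧ α < 1) (hβ : 0 < β ∧ β < 1)
    (hreg : (1 - α) * (1 - β) * A * B > (α * A + β * B) * C)
    (a b c i j : ℕ → ℕ)
    (ha : Tendsto (fun n => (a n : ℝ) / n) atTop (nhds A))
    (hb : Tendsto (fun n => (b n : ℝ) / n) atTop (nhds B))
    (hc : Tendsto (fun n => (c n : ℝ) / n) atTop (nhds C))
    (hi : Tendsto (fun n => (i n : ℝ) / n) atTop (nhds (α * A)))
    (hj : Tendsto (fun n => (j n : ℝ) / n) atTop (nhds (β * B)))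
    (hia : ∀ n, 1 ≤ i n ∧ i n ≤ a n) (hjb : ∀ n, 1 ≤ j n ∧ j n ≤ b n) :
    (∀ᶠ n : ℕ in atTop, 0 < hexSeries (a n) (b n) (c n) (i n) (j n)) ∧
    Tendsto (fun n : ℕ => (1 / (n : ℝ)) * Real.log (hexSeries (a n) (b n) (c n) (i n) (j n)))
      atTop
      (nhds (Real.log
        (((1 - α) * A) ^ ((1 - α) * A) * ((1 - β) * B) ^ ((1 - β) * B) *
            (A + B + C) ^ (A + B + C) * C ^ C /
          ((A + B) ^ (A + B) * ((1 - α) * A + C) ^ ((1 - α) * A + C) *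
            ((1 - β) * B + C) ^ ((1 - β) * B + C))))) := by
  have hinv : Tendsto (fun n : ℕ => (n : ℝ)⁻¹) atTop (nhds 0) :=
    tendsto_inv_atTop_zero.comp tendsto_natCast_atTop_atTop
  have hp : Tendsto (fun n => ((a n - i n : ℕ) : ℝ) / n) atTop (nhds ((1 - α) * A)) := by
    have h := ha.sub hi
    rw [show A - α * A = (1 - α) * A by ring] at h
    refine h.congr fun n => ?_
    rw [Nat.cast_sub (hia n).2]
    ring
  have hq : Tendsto (fun n => ((b n - j n : ℕ) : ℝ) / n) atTop (nhds ((1 - β) * B)) := by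
    have h := hb.sub hj
    rw [show B - β * B = (1 - β) * B by ring] at h
    refine h.congr fun n => ?_
    rw [Nat.cast_sub (hjb n).2]
    ring
  have hN : Tendsto (fun n => ((a n + b n - 1 : ℕ) : ℝ) / n) atTop (nhds (A + B)) := by
    have h := (ha.add hb).sub hinv
    rw [sub_zero] at h
    refine h.congr fun n => ?_
    rw [Nat.cast_sub (by have := hia n; omega)]
    push_cast
    ring
  have hM : Tendsto (fun n => ((i n + j n - 1 : ℕ) : ℝ) / n) atTop (nhds (α * A + β * B)) := by
    have h := (hi.add hj).sub hinv
    rw [sub_zero] at h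
    refine h.congr fun n => ?_
    rw [Nat.cast_sub (by have := hia n; omega)]
    push_cast
    ring
  have hbounds : ∀ᶠ n : ℕ in atTop,
      vandermondeProduct (a n - i n) (b n - j n) (a n + b n - 1) (c n) / ((c n : ℝ) + 1) ≤
        hexSeries (a n) (b n) (c n) (i n) (j n) ∧
      hexSeries (a n) (b n) (c n) (i n) (j n) ≤
        vandermondeProduct (a n - i n) (b n - j n) (a n + b n - 1) (c n) := by
    have hlt : (α * A + β * B) * C < (1 - α) * A * ((1 - β) * B) := by linarith
    filter_upwards [(hM.mul hc).eventually_lt (hp.mul hq) hlt, hc.eventually_const_lt hC,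
      eventually_gt_atTop 0] with n h1 h2 hn
    have hnR : (0 : ℝ) < n := by exact_mod_cast hn
    refine hexSeries_bounds _ _ _ _ _ ?_ (hia n).1 (hia n).2 (hjb n).2 ?_
    · by_contra h0
      have : c n = 0 := by omega
      simp [this] at h2
    · rw [div_mul_div_comm, div_mul_div_comm, div_lt_div_iff_of_pos_right (by positivity)] at h1
      exact_mod_cast h1.le
  have hUpos : ∀ n, 0 <
      vandermondeProduct (a n - i n) (b n - j n) (a n + b n - 1) (c n) := by
    intro n
    unfold vandermondeProduct
    positivity
  have hpos : ∀ᶠ n : ℕ in atTop, 0 < hexSeries (a n) (b n) (c n) (i n) (j n) := by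
    filter_upwards [hbounds] with n h
    exact (div_pos (hUpos n) (by positivity)).trans_le h.1
  refine ⟨hpos, ?_⟩
  have hU := tendsto_log_vandermondeProduct _ _ _ c _ _ _ C
    (mul_pos (sub_pos.2 hα.2) hA) (mul_pos (sub_pos.2 hβ.2) hB) (add_pos hA hB) hC hp hq hN hc
  -- The factor `c + 1` lost in the lower bound is invisible at exponential order.
  have hlogc : Tendsto (fun n : ℕ => Real.log ((c n : ℝ) + 1) / n) atTop (nhds 0) := by
    have h1 : Tendsto (fun n : ℕ => ((c n : ℝ) + 1) / n) atTop (nhds C) := by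
      have h := hc.add hinv
      rw [add_zero] at h
      exact h.congr fun n => by ring
    have h2 : Tendsto (fun n : ℕ => Real.log (((c n : ℝ) + 1) / n)) atTop (nhds (Real.log C)) :=
      (Real.continuousAt_log hC.ne').tendsto.comp h1
    have hlogn : Tendsto (fun n : ℕ => Real.log n / n) atTop (nhds 0) := by
      have := Real.isLittleO_log_id_atTop.tendsto_div_nhds_zero.comp
        (tendsto_natCast_atTop_atTop (R := ℝ))
      simpa [Function.comp_def] using this
    have h3 := (h2.mul hinv).add hlogn
    rw [mul_zero, add_zero] at h3
    refine h3.congr' ?_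
    filter_upwards [eventually_gt_atTop 0] with n hn
    have hnR : (0 : ℝ) < n := by exact_mod_cast hn
    rw [Real.log_div (by positivity) hnR.ne']
    field_simp
    ring
  have hL := hU.sub hlogc
  rw [sub_zero] at hL
  refine tendsto_of_tendsto_of_tendsto_of_le_of_le' hL hU ?_ ?_
  · filter_upwards [hbounds] with n h
    have hlog := Real.log_le_log (div_pos (hUpos n) (by positivity)) h.1
    rw [Real.log_div (hUpos n).ne' (by positivity)] at hlog
    rw [← sub_div, one_div, ← div_eq_inv_mul]
    exact div_le_div_of_nonneg_right hlog (Nat.cast_nonneg n)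
  · filter_upwards [hbounds, hpos] with n h h0
    rw [one_div, ← div_eq_inv_mul]
    exact div_le_div_of_nonneg_right (Real.log_le_log h0 h.2) (Nat.cast_nonneg n)
end
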